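/- arXiv:math/0601249 — 4 statements merged into one kernel-verified Lean document; each statement's English description precedes it below -/
import Mathlib

section
/- Let a_1, …, a_r be positive integers, m = Σ_{i=1}^{r}(a_i − 1) + 1 and p = max{a_1, …, a_r}. If p ≥ 3 and m ≥ p + 2, then F(a_1, …, a_r; m−1) ≤ m + 3p. -/
/-!
Write `m = p + 2 + k`. The witness is the join of `K_k` with a graph on `4p + 2` vertices: the
complement of the cycle on `ZMod (2p + 1)`, together with independent vertices `w_i`, where `w_i` is
adjacent to everything on the cycle but `i`, `i + 1` and `i + 4`. Cliques of the complement of the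
cycle have at most `p` vertices, and those avoiding `i`, `i + 1`, `i + 4` at most `p - 1`, so the
join has clique number at most `p + k < m - 1`.

Given a colouring, call `x` a break if `x` and `x + 1` have different colours. If two breaks are
suitably far apart, choose `p + 1` vertices of the cycle, only two pairs of which are consecutive,
each pair straddling a break. Together with some `w_i` and all of `K_k` they form a set of
`m > ∑ (a_i - 1)` vertices whose colour classes are all cliques, and the pigeonhole principle
applies. Otherwise all breaks lie among three consecutive vertices, so an arc of `2p - 1` vertices
is monochromatic; every second vertex of it gives a monochromatic clique of size `p`.
-/

/-- `G → (a_1, …, a_r)`: for every `r`-coloring of the vertices of `G` there is some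
color `i` whose color class contains a clique of `G` on `a i` vertices. -/
def VArrows {V : Type*} (G : SimpleGraph V) {r : ℕ} (a : Fin r → ℕ) : Prop :=
  ∀ C : V → Fin r, ∃ i : Fin r, ∃ s : Finset V, G.IsNClique (a i) s ∧ ∀ v ∈ s, C v = i

/-- The vertex Folkman number `F(a_1, …, a_r; q)`: the minimum number of vertices of a
graph `G` with `G → (a_1, …, a_r)` and `cl(G) < q`. -/
noncomputable def vertexFolkman {r : ℕ} (a : Fin r → ℕ) (q : ℕ) : ℕ :=
  sInf {n : ℕ | ∃ G : SimpleGraph (Fin n), VArrows G a ∧ G.cliqueNum < q}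

section Arrowing

open SimpleGraph

variable {V W α : Type*}

lemma isNClique_map_copy {G : SimpleGraph V} {H : SimpleGraph W} (φ : Copy G H) {n : ℕ}
    {s : Finset V} (hs : G.IsNClique n s) : H.IsNClique n (s.map φ.toEmbedding) :=
  hs.map.mono <| (map_le_iff_le_comap _ _ _).mpr fun _ _ ↦ φ.toHom.map_adj

lemma cliqueNum_le_of_isContained [Finite W] {G : SimpleGraph V} {H : SimpleGraph W}
    (h : G ⊑ H) : G.cliqueNum ≤ H.cliqueNum := by
  obtain ⟨φ⟩ := h
  obtain ⟨s, hs⟩ := G.exists_isNClique_cliqueNum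
  have hφs := isNClique_map_copy φ hs
  exact hφs.card_eq ▸ hφs.isClique.card_le_cliqueNum

lemma cliqueNum_le_card [Fintype V] (G : SimpleGraph V) : G.cliqueNum ≤ Fintype.card V := by
  obtain ⟨s, hs⟩ := G.exists_isNClique_cliqueNum
  exact hs.card_eq ▸ s.card_le_univ

lemma VArrows.of_isContained {G : SimpleGraph V} {H : SimpleGraph W} {r : ℕ} {a : Fin r → ℕ}
    (hG : VArrows G a) (h : G ⊑ H) : VArrows H a := by
  obtain ⟨φ⟩ := h
  intro C
  obtain ⟨i, s, hs, hC⟩ := hG (C ∘ φ)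
  exact ⟨i, _, isNClique_map_copy φ hs, Finset.forall_mem_map.mpr hC⟩

lemma vertexFolkman_le_card [Fintype V] {G : SimpleGraph V} {r q : ℕ} {a : Fin r → ℕ}
    (hG : VArrows G a) (hq : G.cliqueNum < q) : vertexFolkman a q ≤ Fintype.card V := by
  let e : G ≃g G.overFin rfl := G.overFinIso rfl
  exact Nat.sInf_le ⟨G.overFin rfl, hG.of_isContained ⟨e.toCopy⟩,
    (cliqueNum_le_of_isContained ⟨e.symm.toCopy⟩).trans_lt hq⟩

/-- The graph obtained from `G` by making any two vertices of different colours adjacent. A set is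
a clique of it exactly when each of its colour classes is a clique of `G`. -/
def colorCompletion (G : SimpleGraph V) (f : V → α) : SimpleGraph V :=
  G ⊔ (⊤ : SimpleGraph α).comap f

lemma colorCompletion_adj {G : SimpleGraph V} {f : V → α} {u v : V} :
    (colorCompletion G f).Adj u v ↔ G.Adj u v ∨ f u ≠ f v :=
  Iff.rfl

lemma isClique_of_isClique_colorCompletion {G : SimpleGraph V} {f : V → α} {s : Set V} {c : α}
    (hs : (colorCompletion G f).IsClique s) (hc : ∀ v ∈ s, f v = c) : G.IsClique s :=
  fun _ hu _ hv huv ↦ (hs hu hv huv).resolve_right fun h ↦ h ((hc _ hu).trans (hc _ hv).symm)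

lemma exists_monochromatic_isNClique_of_le_card {G : SimpleGraph V} {r : ℕ} {a : Fin r → ℕ}
    {C : V → Fin r} {i : Fin r} {s : Finset V} (hs : G.IsClique (s : Set V)) (ha : a i ≤ s.card)
    (hC : ∀ v ∈ s, C v = i) :
    ∃ i : Fin r, ∃ t : Finset V, G.IsNClique (a i) t ∧ ∀ v ∈ t, C v = i := by
  obtain ⟨t, hts, ht⟩ := Finset.exists_subset_card_eq ha
  exact ⟨i, t, ⟨hs.subset (Finset.coe_subset.mpr hts), ht⟩, fun v hv ↦ hC v (hts hv)⟩

lemma exists_monochromatic_isNClique_of_sum_lt_card {G : SimpleGraph V} {r : ℕ} {a : Fin r → ℕ}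
    {C : V → Fin r} {s : Finset V} (hs : (colorCompletion G C).IsClique (s : Set V))
    (hcard : ∑ i, (a i - 1) < s.card) :
    ∃ i : Fin r, ∃ t : Finset V, G.IsNClique (a i) t ∧ ∀ v ∈ t, C v = i := by
  classical
  have hfib : ∑ i, (a i - 1) < ∑ i, (s.filter (C · = i)).card := by
    rwa [← Finset.card_eq_sum_card_fiberwise fun _ _ ↦ Finset.mem_univ _]
  obtain ⟨i, -, hi⟩ := Finset.exists_lt_of_sum_lt hfib
  have hC : ∀ v ∈ s.filter (C · = i), C v = i := fun v hv ↦ (Finset.mem_filter.mp hv).2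
  refine exists_monochromatic_isNClique_of_le_card (i := i) ?_ (by omega) hC
  exact isClique_of_isClique_colorCompletion
    (hs.subset (Finset.coe_subset.mpr (Finset.filter_subset _ s))) hC

end Arrowing

section Join

open SimpleGraph

variable {V W α : Type*} {G : SimpleGraph V} {H : SimpleGraph W}

/-- The join of `G` and `H`: their disjoint union together with all edges between the two sides,
encoded as the complement of the disjoint union of the complements. -/
def joinGraph (G : SimpleGraph V) (H : SimpleGraph W) : SimpleGraph (V ⊕ W) :=
  (Gᶜ ⊕g Hᶜ)ᶜ

lemma joinGraph_adj_inl {u v : V} : (joinGraph G H).Adj (.inl u) (.inl v) ↔ G.Adj u v := by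
  simp only [joinGraph, compl_adj, ne_eq, Sum.inl.injEq, sum_adj_inl, not_and, not_not]
  exact ⟨fun h ↦ h.2 h.1, fun h ↦ ⟨h.ne, fun _ ↦ h⟩⟩

lemma joinGraph_adj_inr {u v : W} : (joinGraph G H).Adj (.inr u) (.inr v) ↔ H.Adj u v := by
  simp only [joinGraph, compl_adj, ne_eq, Sum.inr.injEq, sum_adj_inr, not_and, not_not]
  exact ⟨fun h ↦ h.2 h.1, fun h ↦ ⟨h.ne, fun _ ↦ h⟩⟩

lemma joinGraph_adj_inl_inr (v : V) (w : W) : (joinGraph G H).Adj (.inl v) (.inr w) := by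
  simp [joinGraph]

lemma isClique_joinGraph_map_inl {s : Finset V} (hs : G.IsClique (s : Set V)) :
    (joinGraph G H).IsClique (s.map .inl : Finset (V ⊕ W)) := by
  rw [Finset.coe_map]
  rintro _ ⟨u, hu, rfl⟩ _ ⟨v, hv, rfl⟩ huv
  exact joinGraph_adj_inl.mpr (hs hu hv (ne_of_apply_ne _ huv))

lemma cliqueNum_joinGraph_le [Finite V] [Finite W] :
    (joinGraph G H).cliqueNum ≤ G.cliqueNum + H.cliqueNum := by
  obtain ⟨s, hs⟩ := (joinGraph G H).exists_isNClique_cliqueNum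
  have hleft : G.IsClique (s.toLeft : Set V) := fun u hu v hv huv ↦
    joinGraph_adj_inl.mp <| hs.isClique (by simpa using hu) (by simpa using hv) (by simpa using huv)
  have hright : H.IsClique (s.toRight : Set W) := fun u hu v hv huv ↦
    joinGraph_adj_inr.mp <| hs.isClique (by simpa using hu) (by simpa using hv) (by simpa using huv)
  rw [← hs.card_eq, ← s.card_toLeft_add_card_toRight]
  exact add_le_add hleft.card_le_cliqueNum hright.card_le_cliqueNum

lemma isClique_colorCompletion_joinGraph {C : V ⊕ W → α} {s : Finset V} {t : Finset W}
    (hs : (colorCompletion G (C ∘ Sum.inl)).IsClique (s : Set V))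
    (ht : (colorCompletion H (C ∘ Sum.inr)).IsClique (t : Set W)) :
    (colorCompletion (joinGraph G H) C).IsClique (s.disjSum t : Set (V ⊕ W)) := by
  rintro (u | u) hu (v | v) hv huv
  · exact (hs (by simpa using hu) (by simpa using hv) (by simpa using huv)).imp_left
      joinGraph_adj_inl.mpr
  · exact .inl (joinGraph_adj_inl_inr u v)
  · exact .inl (joinGraph_adj_inl_inr v u).symm
  · exact (ht (by simpa using hu) (by simpa using hv) (by simpa using huv)).imp_left
      joinGraph_adj_inr.mpr

lemma vArrows_joinGraph_top [Fintype W] {r p q : ℕ} {a : Fin r → ℕ}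
    (hG : ∀ f : V → Fin r, (∃ c s, G.IsNClique p s ∧ ∀ v ∈ s, f v = c) ∨
      ∃ s, (colorCompletion G f).IsNClique q s)
    (hap : ∀ i, a i ≤ p) (hsum : ∑ i, (a i - 1) < q + Fintype.card W) :
    VArrows (joinGraph G (⊤ : SimpleGraph W)) a := by
  intro C
  obtain ⟨c, s, hs, hC⟩ | ⟨s, hs⟩ := hG (C ∘ Sum.inl)
  · exact exists_monochromatic_isNClique_of_le_card (i := c)
      (isClique_joinGraph_map_inl hs.isClique) (by simpa [hs.card_eq] using hap c)
      (Finset.forall_mem_map.mpr hC)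
  · refine exists_monochromatic_isNClique_of_sum_lt_card (s := s.disjSum Finset.univ)
      (isClique_colorCompletion_joinGraph hs.isClique (IsClique.mono le_sup_left (.top _))) ?_
    rwa [Finset.card_disjSum, hs.card_eq, Finset.card_univ]

end Join

section Cycle

open SimpleGraph

lemma two_mul_card_add_card_le {A : Type*} [AddGroup A] [Fintype A] (g : A) {I M : Finset A}
    (hI : ∀ x ∈ I, x + g ∉ I) (hM : ∀ y ∈ M, y ∉ I ∧ y + g ∉ I) :
    2 * I.card + M.card ≤ Fintype.card A := by
  classical
  let J := I.map (Equiv.subRight g).toEmbedding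
  have hJ : ∀ {y}, y ∈ J ↔ y + g ∈ I := by simp [J, Finset.mem_map_equiv]
  have hIJ : Disjoint I J := Finset.disjoint_left.mpr fun x hx hxJ ↦ hI x hx (hJ.mp hxJ)
  have hIJM : Disjoint (I ∪ J) M := Finset.disjoint_right.mpr fun y hy ↦ by
    simpa [hJ] using hM y hy
  calc 2 * I.card + M.card = ((I ∪ J) ∪ M).card := by
        rw [Finset.card_union_of_disjoint hIJM, Finset.card_union_of_disjoint hIJ,
          Finset.card_map, two_mul]
    _ ≤ Fintype.card A := Finset.card_le_univ _

lemma zmod_natCast_ne_zero {n k : ℕ} (hk : 0 < k) (hkn : k < n) : (k : ZMod n) ≠ 0 := by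
  rw [Ne, ZMod.natCast_eq_zero_iff]
  exact Nat.not_dvd_of_pos_of_lt hk hkn

lemma add_natCast_injOn {n : ℕ} (b : ZMod n) :
    (Set.Iio n).InjOn fun d : ℕ ↦ b + (d : ZMod n) := fun _ hd _ he h ↦
  CharP.natCast_injOn_Iio (ZMod n) n hd he (add_left_cancel h)

/-- The antihole with vertex set `ZMod n`: the complement of the cycle `x ~ x + 1`. -/
abbrev antihole (n : ℕ) : SimpleGraph (ZMod n) :=
  (circulantGraph {1})ᶜ

lemma antihole_adj {n : ℕ} {x y : ZMod n} :
    (antihole n).Adj x y ↔ x ≠ y ∧ x ≠ y + 1 ∧ y ≠ x + 1 := by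
  simp only [compl_adj, circulantGraph_adj, Set.mem_singleton_iff, sub_eq_iff_eq_add']
  grind

/-- The antihole on `ZMod n` together with an independent set of `n` further vertices, the `i`-th of
which is adjacent to all vertices of the antihole but `i`, `i + 1` and `i + 4`. -/
def augmentedAntihole (n : ℕ) : SimpleGraph (ZMod n ⊕ ZMod n) where
  Adj
    | .inl x, .inl y => (antihole n).Adj x y
    | .inl x, .inr i | .inr i, .inl x => x ≠ i ∧ x ≠ i + 1 ∧ x ≠ i + 4
    | .inr _, .inr _ => False
  symm.symm
    | .inl _, .inl _ => (antihole n).adj_symm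
    | .inl _, .inr _ | .inr _, .inl _ | .inr _, .inr _ => id
  loopless.irrefl
    | .inl x => (antihole n).irrefl (v := x)
    | .inr _ => id

section CliqueNum

variable {n : ℕ}

lemma add_one_notMem_of_isClique_antihole (hn : 2 ≤ n) {s : Set (ZMod n)}
    (hs : (antihole n).IsClique s) : ∀ x ∈ s, x + 1 ∉ s := by
  intro x hx hx'
  have hne : x ≠ x + 1 := by simpa using zmod_natCast_ne_zero (n := n) one_pos hn
  exact (antihole_adj.mp (hs hx hx' hne)).2.2 rfl

lemma two_mul_card_le_of_isClique_antihole (hn : 2 ≤ n) {s : Finset (ZMod n)}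
    (hs : (antihole n).IsClique (s : Set (ZMod n))) : 2 * s.card ≤ n := by
  have : NeZero n := ⟨by omega⟩
  simpa [ZMod.card] using two_mul_card_add_card_le 1 (M := ∅)
    (add_one_notMem_of_isClique_antihole hn hs) (by simp)

lemma two_mul_card_add_two_le_of_isClique_antihole (hn : 4 ≤ n) {s : Finset (ZMod n)}
    (hs : (antihole n).IsClique (s : Set (ZMod n))) {i : ZMod n} (h₀ : i ∉ s) (h₁ : i + 1 ∉ s)
    (h₄ : i + 4 ∉ s) : 2 * s.card + 2 ≤ n := by
  have : NeZero n := ⟨by omega⟩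
  have hsucc := add_one_notMem_of_isClique_antihole (by omega) hs
  -- Besides `{i, i + 1}`, the set misses another pair of consecutive elements.
  obtain ⟨j, hij, hj, hj'⟩ : ∃ j, i ≠ j ∧ j ∉ s ∧ j + 1 ∉ s := by
    by_cases h₂ : i + 2 ∈ s
    · refine ⟨i + 3, ?_, ?_, ?_⟩
      · simpa using zmod_natCast_ne_zero (n := n) three_pos hn
      · have := hsucc _ h₂
        rwa [Finset.mem_coe, add_assoc, two_add_one_eq_three] at this
      · convert h₄ using 2; ring
    · refine ⟨i + 1, ?_, h₁, ?_⟩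
      · simpa using zmod_natCast_ne_zero (n := n) one_pos (by omega)
      · convert h₂ using 2; ring
  have := two_mul_card_add_card_le 1 hsucc (M := {i, j}) (by simp [*])
  rwa [Finset.card_pair hij, ZMod.card] at this

lemma two_mul_cliqueNum_augmentedAntihole_le (hn : 4 ≤ n) :
    2 * (augmentedAntihole n).cliqueNum ≤ n := by
  obtain ⟨s, hs⟩ := (augmentedAntihole n).exists_isNClique_cliqueNum
  have hleft : (antihole n).IsClique (s.toLeft : Set (ZMod n)) := fun x hx y hy hxy ↦
    hs.isClique (Finset.mem_toLeft.mp hx) (Finset.mem_toLeft.mp hy) (by simpa using hxy)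
  have hright : s.toRight.card ≤ 1 := Finset.card_le_one.mpr fun i hi j hj ↦ by
    by_contra hij
    exact hs.isClique (Finset.mem_toRight.mp hi) (Finset.mem_toRight.mp hj) (by simpa using hij)
  rw [← hs.card_eq, ← s.card_toLeft_add_card_toRight]
  obtain hempty | ⟨i, hi⟩ := s.toRight.eq_empty_or_nonempty
  · simpa [hempty] using two_mul_card_le_of_isClique_antihole (by omega) hleft
  · have hmiss : ∀ x ∈ s.toLeft, x ≠ i ∧ x ≠ i + 1 ∧ x ≠ i + 4 := fun x hx ↦
      hs.isClique (Finset.mem_toLeft.mp hx) (Finset.mem_toRight.mp hi) Sum.inl_ne_inr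
    have := two_mul_card_add_two_le_of_isClique_antihole hn hleft (i := i)
      (fun h ↦ (hmiss _ h).1 rfl) (fun h ↦ (hmiss _ h).2.1 rfl) (fun h ↦ (hmiss _ h).2.2 rfl)
    omega

end CliqueNum

section Breaks

lemma zmod_natCast_notMem_of_three_le {n k : ℕ} (hk : 3 ≤ k) (hkn : k + 3 ≤ n) :
    (k : ZMod n) ∉ ({-2, -1, 0, 1, 2} : Set (ZMod n)) := by
  have hne {d e : ℕ} (hed : e < d) (hd : d < n) : (d : ZMod n) ≠ e :=
    (CharP.natCast_injOn_Iio (ZMod n) n).ne hd (hed.trans hd) hed.ne'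
  rintro (h | h | h | h | h)
  · exact hne (d := k + 2) (e := 0) (by omega) (by omega) (by simp [h])
  · exact hne (d := k + 1) (e := 0) (by omega) (by omega) (by simp [h])
  · exact hne (d := k) (e := 0) (by omega) (by omega) (by simp [h])
  · exact hne (d := k) (e := 1) (by omega) (by omega) (by simp [h])
  · exact hne (d := k) (e := 2) (by omega) (by omega) (by simpa using h)

lemma exists_subset_three_consecutive {n : ℕ} (hn : 7 ≤ n) {D : Set (ZMod n)}
    (hD : ∀ x ∈ D, ∀ y ∈ D, y - x ∈ ({-2, -1, 0, 1, 2} : Set (ZMod n))) :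
    ∃ b, D ⊆ {b, b + 1, b + 2} := by
  obtain rfl | ⟨x, hx⟩ := D.eq_empty_or_nonempty
  · exact ⟨0, Set.empty_subset _⟩
  have hDsub (k : ℕ) (hk : 3 ≤ k) (hkn : k + 3 ≤ n) : x - k ∉ D := fun h ↦
    zmod_natCast_notMem_of_three_le hk hkn (by simpa using hD _ h x hx)
  have hx₃ : x - 3 ∉ D := hDsub 3 le_rfl (by omega)
  have hx₄ : x - 4 ∉ D := hDsub 4 (by simp) hn
  obtain ⟨b, hb, hb₁, hb₂⟩ : ∃ b ∈ D, b - 1 ∉ D ∧ b - 2 ∉ D := by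
    by_cases hx₂ : x - 2 ∈ D
    · exact ⟨x - 2, hx₂, by convert hx₃ using 2; ring, by convert hx₄ using 2; ring⟩
    by_cases hx₁ : x - 1 ∈ D
    · exact ⟨x - 1, hx₁, by convert hx₂ using 2; ring, by convert hx₃ using 2; ring⟩
    · exact ⟨x, hx, hx₁, hx₂⟩
  refine ⟨b, fun y hy ↦ ?_⟩
  obtain h | h | h | h | h := hD b hb y hy
  · exact absurd hy (by rwa [show y = b - 2 by linear_combination h])
  · exact absurd hy (by rwa [show y = b - 1 by linear_combination h])
  · exact .inl (by linear_combination h)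
  · exact .inr (.inl (by linear_combination h))
  · exact .inr (.inr (by linear_combination Set.mem_singleton_iff.mp h : y = b + 2))

lemma exists_odd_gap_or_subset_three_consecutive {p : ℕ} (hp : 3 ≤ p)
    (D : Set (ZMod (2 * p + 1))) :
    (∃ x ∈ D, ∃ t : ℕ, 1 ≤ t ∧ t + 2 ≤ p ∧ x + ((2 * t + 1 : ℕ) : ZMod (2 * p + 1)) ∈ D) ∨
      ∃ b, D ⊆ {b, b + 1, b + 2} := by
  refine or_iff_not_imp_left.mpr fun hgap ↦ exists_subset_three_consecutive (by omega) ?_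
  intro x hx y hy
  obtain ⟨d, hd, hyx⟩ : ∃ d < 2 * p + 1, y = x + ((d : ℕ) : ZMod (2 * p + 1)) :=
    ⟨(y - x).val, ZMod.val_lt _, by simp⟩
  rw [hyx, add_sub_cancel_left]
  have hcycle : 2 * (p : ZMod (2 * p + 1)) + 1 = 0 := mod_cast ZMod.natCast_self (2 * p + 1)
  obtain hd₂ | ⟨hd₃, hd₄⟩ | rfl | rfl :
      d ≤ 2 ∨ (3 ≤ d ∧ d ≤ 2 * p - 2) ∨ d = 2 * p - 1 ∨ d = 2 * p := by omega
  · interval_cases d <;> simp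
  · refine absurd ?_ hgap
    obtain ⟨c, rfl | rfl⟩ := Nat.even_or_odd' d
    -- An even gap from `x` to `y` leaves an odd gap from `y` around the cycle back to `x`.
    · refine ⟨y, hy, p - c, by omega, by omega, ?_⟩
      convert hx
      rw [hyx, add_assoc, ← Nat.cast_add, show 2 * c + (2 * (p - c) + 1) = 2 * p + 1 by omega,
        ZMod.natCast_self, add_zero]
    · exact ⟨x, hx, c, by omega, by omega, hyx ▸ hy⟩
  · have : ((2 * p - 1 : ℕ) : ZMod (2 * p + 1)) = -2 := by
      push_cast [Nat.cast_sub (by omega : 1 ≤ 2 * p)]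
      linear_combination hcycle
    simp [this]
  · have : ((2 * p : ℕ) : ZMod (2 * p + 1)) = -1 := by
      push_cast
      linear_combination hcycle
    simp [this]

end Breaks

section Arrows

variable {n : ℕ} {α : Type*}

lemma isClique_colorCompletion_antihole_image {f : ZMod n → α} {b : ZMod n} {E : Set ℕ}
    (hE : ∀ d ∈ E, 0 < d ∧ d < n)
    (hf : ∀ d ∈ E, d + 1 ∈ E → f (b + (d : ZMod n)) ≠ f (b + (d : ZMod n) + 1)) :
    (colorCompletion (antihole n) f).IsClique ((fun d : ℕ ↦ b + (d : ZMod n)) '' E) := by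
  have hsucc : ∀ d ∈ E, ∀ e ∈ E, b + (d : ZMod n) = b + (e : ZMod n) + 1 →
      f (b + (e : ZMod n)) ≠ f (b + (d : ZMod n)) := by
    intro d hd e he h
    obtain ⟨c, rfl⟩ := Nat.exists_eq_succ_of_ne_zero (hE d hd).1.ne'
    have hce : c = e := add_natCast_injOn b ((Nat.lt_succ_self c).trans (hE _ hd).2) (hE e he).2 <|
      add_right_cancel (b := 1) (by simpa [add_assoc] using h)
    rw [h]
    exact hf e he (hce ▸ hd)
  rintro _ ⟨d, hd, rfl⟩ _ ⟨e, he, rfl⟩ hde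
  refine colorCompletion_adj.mpr (or_iff_not_imp_right.mpr fun hcol ↦ antihole_adj.mpr ?_)
  rw [not_not] at hcol
  exact ⟨hde, fun h ↦ hsucc d hd e he h hcol.symm, fun h ↦ hsucc e he d hd h hcol⟩

lemma isClique_colorCompletion_augmentedAntihole {C : ZMod n ⊕ ZMod n → α} {s : Finset (ZMod n)}
    (hs : (colorCompletion (antihole n) (C ∘ Sum.inl)).IsClique (s : Set (ZMod n))) {i : ZMod n}
    (hi : ∀ x ∈ s, x ≠ i ∧ x ≠ i + 1 ∧ x ≠ i + 4) :
    (colorCompletion (augmentedAntihole n) C).IsClique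
      (s.disjSum {i} : Finset (ZMod n ⊕ ZMod n)) := by
  rintro (x | x) hx (y | y) hy hxy <;>
    simp only [Finset.mem_coe, Finset.inl_mem_disjSum, Finset.inr_mem_disjSum,
      Finset.mem_singleton] at hx hy
  · exact hs hx hy (by simpa using hxy)
  · exact .inl (hy ▸ hi x hx)
  · exact .inl (hx ▸ hi y hy)
  · exact absurd (hx.trans hy.symm) (by simpa using hxy)

lemma isNClique_augmentedAntihole_map_inl {k : ℕ} {s : Finset (ZMod n)}
    (hs : (antihole n).IsNClique k s) : (augmentedAntihole n).IsNClique k (s.map .inl) := by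
  refine ⟨?_, by simpa using hs.card_eq⟩
  rw [Finset.coe_map]
  rintro _ ⟨x, hx, rfl⟩ _ ⟨y, hy, rfl⟩ hxy
  exact hs.isClique hx hy (ne_of_apply_ne _ hxy)

/-- The increasing enumeration `2, 3, 5, …, 2t + 3, 2t + 4, 2t + 6, …`, whose only pairs of
consecutive values are `2, 3` and `2t + 3, 2t + 4`. -/
def twoBreakOffset (t j : ℕ) : ℕ :=
  if j = 0 then 2 else if j ≤ t + 1 then 2 * j + 1 else 2 * j

lemma twoBreakOffset_injective (t : ℕ) : Function.Injective (twoBreakOffset t) := by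
  intro i j h
  grind [twoBreakOffset]

lemma twoBreakOffset_eq_add_one {t i j : ℕ} (h : twoBreakOffset t i = twoBreakOffset t j + 1) :
    twoBreakOffset t j = 2 ∨ twoBreakOffset t j = 2 * t + 3 := by
  grind [twoBreakOffset]

lemma twoBreakOffset_bounds {p t j : ℕ} (htp : t + 2 ≤ p) (hj : j ≤ p) :
    2 ≤ twoBreakOffset t j ∧ twoBreakOffset t j ≤ 2 * p := by
  grind [twoBreakOffset]

lemma twoBreakOffset_ne_four {t : ℕ} (ht : 1 ≤ t) (j : ℕ) : twoBreakOffset t j ≠ 4 := by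
  grind [twoBreakOffset]

lemma exists_isNClique_colorCompletion_of_breaks {p t : ℕ} (ht : 1 ≤ t) (htp : t + 2 ≤ p)
    {C : ZMod (2 * p + 1) ⊕ ZMod (2 * p + 1) → α} {x : ZMod (2 * p + 1)}
    (hx : C (.inl x) ≠ C (.inl (x + 1)))
    (hxt : C (.inl (x + (2 * t + 1 : ℕ))) ≠ C (.inl (x + (2 * t + 1 : ℕ) + 1))) :
    ∃ s, (colorCompletion (augmentedAntihole (2 * p + 1)) C).IsNClique (p + 2) s := by
  obtain ⟨i, rfl⟩ : ∃ i, x = i + 2 := ⟨x - 2, by simp⟩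
  let E := (Finset.range (p + 1)).image (twoBreakOffset t)
  have hE : ∀ d ∈ E, (2 ≤ d ∧ d ≤ 2 * p) ∧ d ≠ 4 := by
    refine Finset.forall_mem_image.mpr fun j hj ↦ ⟨?_, twoBreakOffset_ne_four ht j⟩
    exact twoBreakOffset_bounds htp (Finset.mem_range_succ_iff.mp hj)
  have hinj := add_natCast_injOn i
  have hElt : (E : Set ℕ) ⊆ Set.Iio (2 * p + 1) := fun d hd ↦ Nat.lt_succ_of_le (hE d hd).1.2
  let s := E.image fun d : ℕ ↦ i + (d : ZMod (2 * p + 1))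
  have hs : (colorCompletion (antihole (2 * p + 1)) (C ∘ Sum.inl)).IsClique
      (s : Set (ZMod (2 * p + 1))) := by
    rw [Finset.coe_image]
    refine isClique_colorCompletion_antihole_image
      (fun d hd ↦ ⟨two_pos.trans_le (hE d hd).1.1, hElt hd⟩) fun d hd hd' ↦ ?_
    obtain ⟨j, -, rfl⟩ := Finset.mem_image.mp hd
    obtain ⟨k, -, hk⟩ := Finset.mem_image.mp hd'
    obtain h | h := twoBreakOffset_eq_add_one hk
    · simpa [h] using hx
    · have hi : i + ((2 * t + 3 : ℕ) : ZMod (2 * p + 1)) = i + 2 + (2 * t + 1 : ℕ) := by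
        push_cast
        ring
      simpa only [h, hi, Function.comp_apply] using hxt
  have hcard : s.card = p + 1 := by
    rw [Finset.card_image_of_injOn (hinj.mono hElt),
      Finset.card_image_of_injective _ (twoBreakOffset_injective t), Finset.card_range]
  have hmiss : ∀ e < 2 * p + 1, e ∉ E → ∀ y ∈ s, y ≠ i + (e : ZMod (2 * p + 1)) := by
    rintro e he heE y hy rfl
    obtain ⟨d, hd, hde⟩ := Finset.mem_image.mp hy
    exact heE (hinj (hElt hd) he hde ▸ hd)
  refine ⟨s.disjSum {i}, isClique_colorCompletion_augmentedAntihole hs fun y hy ↦ ⟨?_, ?_, ?_⟩, ?_⟩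
  · simpa using hmiss 0 (by omega) (fun h ↦ by have := hE 0 h; omega) y hy
  · simpa using hmiss 1 (by omega) (fun h ↦ by have := hE 1 h; omega) y hy
  · simpa using hmiss 4 (by omega) (fun h ↦ by have := hE 4 h; omega) y hy
  · rw [Finset.card_disjSum, hcard, Finset.card_singleton]

lemma apply_add_natCast_eq_of_forall_lt {R : Type*} [AddMonoidWithOne R] {f : R → α} {x : R} {k : ℕ}
    (h : ∀ j < k, f (x + j) = f (x + j + 1)) : ∀ j ≤ k, f (x + j) = f x := by
  intro j hj
  induction j with
  | zero => simp
  | succ j ih => rw [Nat.cast_succ, ← add_assoc, ← h j hj, ih (Nat.le_of_succ_le hj)]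

lemma apply_eq_on_arc_of_breaks_subset {p : ℕ} {f : ZMod (2 * p + 1) → α} {b : ZMod (2 * p + 1)}
    (hb : {x | f x ≠ f (x + 1)} ⊆ {b, b + 1, b + 2}) {j : ℕ} (hj : j ≤ 2 * p - 2) :
    f (b + 3 + j) = f (b + 3) := by
  refine apply_add_natCast_eq_of_forall_lt (fun i hi ↦ ?_) j hj
  by_contra hne
  have hoff (e : ℕ) (he : e < 3) : b + 3 + (i : ZMod (2 * p + 1)) ≠ b + (e : ZMod (2 * p + 1)) := by
    intro h
    have : 3 + i = e := add_natCast_injOn b (by simp; omega) (by simp; omega)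
      (by simpa [add_assoc] using h)
    omega
  have h₀ := hoff 0 (by simp)
  have h₁ := hoff 1 (by simp)
  have h₂ := hoff 2 (by simp)
  simp only [Nat.cast_zero, add_zero, Nat.cast_one, Nat.cast_ofNat] at h₀ h₁ h₂
  obtain h | h | h := hb hne <;> contradiction

lemma exists_monochromatic_isNClique_antihole {p : ℕ} {f : ZMod (2 * p + 1) → α}
    {b : ZMod (2 * p + 1)} (hb : {x | f x ≠ f (x + 1)} ⊆ {b, b + 1, b + 2}) :
    ∃ c s, (antihole (2 * p + 1)).IsNClique p s ∧ ∀ x ∈ s, f x = c := by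
  let E := (Finset.range p).image fun j ↦ 2 * j + 1
  have hE : ∀ d ∈ E, d < 2 * p + 1 ∧ Odd d := by
    refine Finset.forall_mem_image.mpr fun j hj ↦ ⟨?_, odd_two_mul_add_one j⟩
    have := Finset.mem_range.mp hj
    omega
  let s := E.image fun d : ℕ ↦ b + 2 + (d : ZMod (2 * p + 1))
  have hcolor : ∀ x ∈ s, f x = f (b + 3) := by
    simp only [s, E, Finset.forall_mem_image, Finset.mem_range]
    intro j hj
    rw [← apply_eq_on_arc_of_breaks_subset hb (j := 2 * j) (by omega)]
    congr 1
    push_cast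
    ring
  have hs : (colorCompletion (antihole (2 * p + 1)) f).IsClique (s : Set (ZMod (2 * p + 1))) := by
    rw [Finset.coe_image]
    exact isClique_colorCompletion_antihole_image (fun d hd ↦ ⟨(hE d hd).2.pos, (hE d hd).1⟩)
      fun d hd hd' ↦ absurd (hE _ hd').2 (by simpa using (hE d hd).2.add_one)
  refine ⟨f (b + 3), s, ⟨isClique_of_isClique_colorCompletion hs hcolor, ?_⟩, hcolor⟩
  rw [Finset.card_image_of_injOn ((add_natCast_injOn (b + 2)).mono fun d hd ↦ (hE d hd).1),
    Finset.card_image_of_injective _ fun i j h ↦ by simpa using h, Finset.card_range]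

lemma exists_isNClique_augmentedAntihole_or_colorCompletion {p : ℕ} (hp : 3 ≤ p)
    (C : ZMod (2 * p + 1) ⊕ ZMod (2 * p + 1) → α) :
    (∃ c s, (augmentedAntihole (2 * p + 1)).IsNClique p s ∧ ∀ v ∈ s, C v = c) ∨
      ∃ s, (colorCompletion (augmentedAntihole (2 * p + 1)) C).IsNClique (p + 2) s := by
  obtain ⟨x, hx, t, ht, htp, hxt⟩ | ⟨b, hb⟩ := exists_odd_gap_or_subset_three_consecutive hp
    {x | C (.inl x) ≠ C (.inl (x + 1))}
  · exact .inr (exists_isNClique_colorCompletion_of_breaks ht htp hx hxt)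
  · obtain ⟨c, s, hs, hc⟩ := exists_monochromatic_isNClique_antihole (f := C ∘ Sum.inl) hb
    exact .inl ⟨c, _, isNClique_augmentedAntihole_map_inl hs, Finset.forall_mem_map.mpr hc⟩

end Arrows

end Cycle

/-- **Main theorem.** If `a_1, …, a_r` are positive integers,
`m = Σ (a_i - 1) + 1`, `p = max {a_1, …, a_r}`, `p ≥ 3` and `m ≥ p + 2`, then
`F(a_1, …, a_r; m-1) ≤ m + 3p`. -/
theorem folkman_upper_bound {r : ℕ} (hr : 1 ≤ r) (a : Fin r → ℕ)
    (ha : ∀ i, 1 ≤ a i) (m p : ℕ)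
    (hm : m = (∑ i, (a i - 1)) + 1) (hp : p = Finset.univ.sup a)
    (hp3 : 3 ≤ p) (hmp : p + 2 ≤ m) :
    vertexFolkman a (m - 1) ≤ m + 3 * p := by
  obtain ⟨k, rfl⟩ := Nat.exists_eq_add_of_le hmp
  let G := joinGraph (augmentedAntihole (2 * p + 1)) (⊤ : SimpleGraph (Fin k))
  have hap : ∀ i, a i ≤ p := fun i ↦ hp ▸ Finset.le_sup (Finset.mem_univ i)
  have hG : VArrows G a := vArrows_joinGraph_top
    (exists_isNClique_augmentedAntihole_or_colorCompletion hp3) hap (by simp; omega)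
  have hclique : G.cliqueNum < p + 2 + k - 1 := by
    have hjoin : G.cliqueNum ≤ _ := cliqueNum_joinGraph_le
    have hleft := two_mul_cliqueNum_augmentedAntihole_le (n := 2 * p + 1) (by omega)
    have hright := cliqueNum_le_card (⊤ : SimpleGraph (Fin k))
    rw [Fintype.card_fin] at hright
    omega
  calc vertexFolkman a (p + 2 + k - 1)
      ≤ Fintype.card ((ZMod (2 * p + 1) ⊕ ZMod (2 * p + 1)) ⊕ Fin k) :=
        vertexFolkman_le_card hG hclique
    _ = p + 2 + k + 3 * p := by
        simp only [Fintype.card_sum, ZMod.card, Fintype.card_fin]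
        ring
end

section
/- Let p ≥ 1, let V ⊆ V(C_{2p+1}) with |V| = n < 2p+1 and n even, let G = C̄_{2p+1}[V], and let G_1, …, G_s be the connected components of the graph C_{2p+1}[V]. Then cl(G) = ⌈n/2⌉ holds if and only if all the numbers |V(G_1)|, …, |V(G_s)| are even (otherwise cl(G) > ⌈n/2⌉). -/
/-!
Cliques of the complement are independent sets, so `cl(G)` is the independence number of the
induced part of the cycle. As a vertex is missing, that part embeds into the infinite path, and its
components are paths. An independent set takes at most `⌈k/2⌉` vertices from a path on `k` vertices,
and the larger colour classes of the components together form an independent set attaining all these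
bounds. Summing over the components gives `2 cl(G) = n + #{odd components}`.
-/

open SimpleGraph

section Components

variable {V : Type*} {G : SimpleGraph V}

theorem sum_ncard_inter_supp [Fintype G.ConnectedComponent] {s : Set V} (hs : s.Finite) :
    ∑ c : G.ConnectedComponent, (s ∩ c.supp).ncard = s.ncard := by
  have hdisj : Pairwise (Function.onFun Disjoint fun c : G.ConnectedComponent ↦ s ∩ c.supp) :=
    fun _ _ hne ↦ (pairwise_disjoint_supp_connectedComponent G hne).mono
      Set.inter_subset_right Set.inter_subset_right
  rw [← finsum_eq_sum_of_fintype, ← Set.ncard_iUnion_of_finite (fun _ ↦ hs.inter_of_left _) hdisj,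
    ← Set.inter_iUnion, iUnion_connectedComponentSupp, Set.inter_univ]

theorem two_mul_sum_ceil_half_ncard_supp [Finite V] [Fintype G.ConnectedComponent] :
    2 * ∑ c : G.ConnectedComponent, (c.supp.ncard + 1) / 2 =
      Nat.card V + G.oddComponents.ncard := by
  classical
  have hround (k : ℕ) : 2 * ((k + 1) / 2) = k + if Odd k then 1 else 0 := by grind
  have hodd : ∑ c : G.ConnectedComponent, (if Odd c.supp.ncard then 1 else 0) =
      G.oddComponents.ncard := by
    rw [Finset.sum_boole, Nat.cast_id, ← Set.ncard_coe_finset, Finset.coe_filter_univ]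
  have hcard : ∑ c : G.ConnectedComponent, c.supp.ncard = Nat.card V := by
    simpa only [Set.univ_inter, Set.ncard_univ] using sum_ncard_inter_supp (G := G) Set.finite_univ
  simp only [Finset.mul_sum, hround, Finset.sum_add_distrib, hodd, hcard]

theorem ncard_oddComponents_eq_zero_iff [Finite G.ConnectedComponent] :
    G.oddComponents.ncard = 0 ↔ ∀ c : G.ConnectedComponent, Even c.supp.ncard := by
  rw [Set.ncard_eq_zero, Set.eq_empty_iff_forall_notMem]
  exact forall_congr' fun _ ↦ Nat.not_odd_iff_even

theorem isIndepSet_setOf_coloring_eq (C : G.Coloring Bool) (b : G.ConnectedComponent → Bool) :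
    G.IsIndepSet {v | C v = b (G.connectedComponentMk v)} := by
  intro u hu v hv _ huv
  have hsame : G.connectedComponentMk u = G.connectedComponentMk v :=
    ConnectedComponent.sound huv.reachable
  exact C.valid huv (hu.trans ((congrArg b hsame).trans hv.symm))

theorem exists_ceil_half_ncard_le_ncard_inter_preimage {α : Type*} {t : Set α} (ht : t.Finite)
    (C : α → Bool) : ∃ b, (t.ncard + 1) / 2 ≤ (t ∩ C ⁻¹' {b}).ncard := by
  have hsplit : (t ∩ C ⁻¹' {true}).ncard + (t ∩ C ⁻¹' {false}).ncard = t.ncard := by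
    rw [← Set.ncard_inter_add_ncard_sdiff_eq_ncard t (C ⁻¹' {true}) ht]
    congr 2
    ext; simp
  by_contra! h
  have := h true
  have := h false
  omega

theorem sum_ceil_half_ncard_supp_le_indepNum [Finite V] [Fintype G.ConnectedComponent]
    (hG : G.IsBipartite) :
    ∑ c : G.ConnectedComponent, (c.supp.ncard + 1) / 2 ≤ G.indepNum := by
  classical
  have := Fintype.ofFinite V
  let C : G.Coloring Bool := hG.toColoring (by simp)
  choose b hb using fun c : G.ConnectedComponent ↦
    exists_ceil_half_ncard_le_ncard_inter_preimage c.supp.toFinite C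
  let s : Set V := {v | C v = b (G.connectedComponentMk v)}
  have hs (c : G.ConnectedComponent) : c.supp ∩ C ⁻¹' {b c} = s ∩ c.supp := by
    grind [ConnectedComponent.mem_supp_iff]
  calc ∑ c : G.ConnectedComponent, (c.supp.ncard + 1) / 2
      ≤ ∑ c : G.ConnectedComponent, (s ∩ c.supp).ncard :=
        Finset.sum_le_sum fun c _ ↦ (hb c).trans_eq (congrArg Set.ncard (hs c))
    _ = s.ncard := sum_ncard_inter_supp s.toFinite
    _ = s.toFinset.card := Set.ncard_eq_toFinset_card' s
    _ ≤ G.indepNum := IsIndepSet.card_le_indepNum (by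
        simpa only [Set.coe_toFinset] using isIndepSet_setOf_coloring_eq C b)

end Components

section Hasse

theorem exists_reachable_apply_eq {V α : Type*} [LinearOrder α] {G : SimpleGraph V}
    (f : G →g hasse α) {u v : V} (huv : G.Reachable u v) {a : α} (hua : f u ≤ a) (hav : a ≤ f v) :
    ∃ w, G.Reachable u w ∧ f w = a := by
  obtain hva | hva := le_or_gt (f v) a
  · exact ⟨v, huv, le_antisymm hva hav⟩
  · classical
    obtain ⟨p⟩ := huv
    obtain ⟨d, hdp, hfst, hsnd⟩ := p.exists_boundary_dart {x | f x ≤ a} hua hva.not_ge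
    have hlt : a < f d.snd := not_le.1 hsnd
    have hcov : f d.fst ⋖ f d.snd := (hasse_adj.1 (f.map_adj d.adj)).resolve_right
      fun h ↦ (hfst.trans_lt hlt).not_gt h.lt
    exact ⟨d.fst, (p.takeUntil _ (p.dart_fst_mem_support_of_mem_darts hdp)).reachable,
      hfst.eq_of_not_lt fun h ↦ hcov.2 h hlt⟩

theorem ordConnected_image_supp {V α : Type*} [LinearOrder α] {G : SimpleGraph V}
    (f : G →g hasse α) (c : G.ConnectedComponent) : (f '' c.supp).OrdConnected := by
  refine ⟨?_⟩
  rintro _ ⟨u, hu, rfl⟩ _ ⟨v, hv, rfl⟩ a ⟨hua, hav⟩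
  obtain ⟨w, huw, rfl⟩ :=
    exists_reachable_apply_eq f (ConnectedComponent.exact (hu.trans hv.symm)) hua hav
  exact ⟨w, (ConnectedComponent.sound huw.symm).trans hu, rfl⟩

theorem isBipartite_hasse_nat : (hasse ℕ).IsBipartite := by
  let C : (hasse ℕ).Coloring Bool := Coloring.mk (fun k ↦ decide (Even k)) <| by
    intro a b hab
    rw [hasse_adj, Order.covBy_iff_add_one_eq, Order.covBy_iff_add_one_eq] at hab
    grind
  exact C.colorable

theorem ncard_le_ceil_half_of_isIndepSet_hasse_nat {s t : Set ℕ} (hs : (hasse ℕ).IsIndepSet s)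
    (hst : s ⊆ t) (ht : t.OrdConnected) (hfin : t.Finite) : s.ncard ≤ (t.ncard + 1) / 2 := by
  obtain rfl | hne := t.eq_empty_or_nonempty
  · simp [Set.subset_empty_iff.1 hst]
  obtain ⟨m, hm, hmax⟩ := hfin.exists_maximal hne
  have hdisj : Disjoint s (Nat.succ '' s) := by
    rw [Set.disjoint_right]
    rintro _ ⟨a, ha, rfl⟩ ha'
    exact hs ha ha' (by simp) (.inl (Order.covBy_add_one a))
  have hsucc : Nat.succ '' s ⊆ insert (m + 1) t := by
    rintro _ ⟨a, ha, rfl⟩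
    obtain rfl | hne := eq_or_ne a m
    · exact Set.mem_insert _ _
    · have : a ≤ m := by grind
      exact .inr (ht.out (hst ha) hm ⟨a.le_succ, by grind⟩)
  have hcard := calc
    2 * s.ncard = s.ncard + (Nat.succ '' s).ncard := by
        rw [Set.ncard_image_of_injective s Nat.succ_injective, two_mul]
    _ = (s ∪ Nat.succ '' s).ncard :=
        (Set.ncard_union_eq hdisj (hfin.subset hst) ((hfin.subset hst).image _)).symm
    _ ≤ (insert (m + 1) t).ncard :=
        Set.ncard_le_ncard (Set.union_subset (hst.trans (Set.subset_insert _ _)) hsucc)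
          (hfin.insert _)
    _ ≤ t.ncard + 1 := Set.ncard_insert_le _ _
  omega

variable {V : Type*} {G : SimpleGraph V}

theorem isIndepSet_image {W : Type*} {H : SimpleGraph W} (f : G ↪g H) {s : Set V}
    (hs : G.IsIndepSet s) : H.IsIndepSet (f '' s) := by
  rintro _ ⟨u, hu, rfl⟩ _ ⟨v, hv, rfl⟩ hne huv
  exact hs hu hv (ne_of_apply_ne f hne) (f.map_adj_iff.1 huv)

variable [Finite V]

theorem indepNum_le_sum_ceil_half_ncard_supp [Fintype G.ConnectedComponent] (f : G ↪g hasse ℕ) :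
    G.indepNum ≤ ∑ c : G.ConnectedComponent, (c.supp.ncard + 1) / 2 := by
  have := Fintype.ofFinite V
  obtain ⟨s, hs⟩ := G.exists_isNIndepSet_indepNum
  have hcomp (c : G.ConnectedComponent) :
      ((s : Set V) ∩ c.supp).ncard ≤ (c.supp.ncard + 1) / 2 := by
    rw [← Set.ncard_image_of_injective _ f.injective,
      ← Set.ncard_image_of_injective c.supp f.injective]
    exact ncard_le_ceil_half_of_isIndepSet_hasse_nat
      (isIndepSet_image f (hs.isIndepSet.mono Set.inter_subset_left))
      (Set.image_mono Set.inter_subset_right)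
      (ordConnected_image_supp f.toHom c) (Set.toFinite _)
  calc G.indepNum = (s : Set V).ncard := by rw [Set.ncard_coe_finset, hs.card_eq]
    _ = ∑ c : G.ConnectedComponent, ((s : Set V) ∩ c.supp).ncard :=
        (sum_ncard_inter_supp s.finite_toSet).symm
    _ ≤ _ := Finset.sum_le_sum fun c _ ↦ hcomp c

theorem two_mul_indepNum_of_embedding_hasse_nat (f : G ↪g hasse ℕ) :
    2 * G.indepNum = Nat.card V + G.oddComponents.ncard := by
  have := Fintype.ofFinite G.ConnectedComponent
  have hG : G.IsBipartite := isBipartite_hasse_nat.of_hom f.toHom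
  rw [← two_mul_sum_ceil_half_ncard_supp,
    (indepNum_le_sum_ceil_half_ncard_supp f).antisymm (sum_ceil_half_ncard_supp_le_indepNum hG)]

end Hasse

section Cycle

theorem induce_compl {V : Type*} (G : SimpleGraph V) (s : Set V) :
    Gᶜ.induce s = (G.induce s)ᶜ := by
  ext u v
  simp [Subtype.ext_iff]

theorem val_sub_eq_one_iff {m : ℕ} [NeZero m] {a b : Fin m} (ha : a ≠ 0) :
    (a - b).val = 1 ↔ b.val + 1 = a.val := by
  have ha' : a.val ≠ 0 := Fin.val_ne_zero_iff.2 ha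
  obtain hba | hab := le_or_gt b a
  · rw [Fin.sub_val_of_le hba]
    omega
  · rw [Fin.coe_sub_iff_lt.2 hab]
    omega

/-- The embedding into the infinite path `0, 1, 2, …` of a part of a cycle that misses the vertex
`v₀`: cut the cycle at `v₀` and number the remaining vertices by their distance past `v₀`. -/
def induceCycleGraphEmbedding {m : ℕ} {s : Set (Fin m)} {v₀ : Fin m} (hv₀ : v₀ ∉ s) :
    (cycleGraph m).induce s ↪g hasse ℕ where
  toFun v := (v.1 - v₀).val
  inj' u v huv := by
    have := v₀.neZero
    exact Subtype.ext (sub_left_injective (Fin.val_injective huv))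
  map_rel_iff' {u v} := by
    have := v₀.neZero
    have hne (w : s) : w.1 - v₀ ≠ 0 := sub_ne_zero.2 (ne_of_mem_of_not_mem w.2 hv₀)
    have hstep (x y : s) : (x.1 - y.1).val = 1 ↔ (y.1 - v₀).val + 1 = (x.1 - v₀).val := by
      rw [← sub_sub_sub_cancel_right x.1 y.1 v₀, val_sub_eq_one_iff (hne x)]
    simp only [hasse_adj, Order.covBy_iff_add_one_eq, comap_adj,
      Function.Embedding.subtype_apply, cycleGraph_adj', hstep]
    exact or_comm

theorem two_mul_cliqueNum_induce_compl_cycleGraph {m : ℕ} {s : Set (Fin m)} (hs : s ≠ Set.univ) :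
    2 * ((cycleGraph m)ᶜ.induce s).cliqueNum =
      s.ncard + ((cycleGraph m).induce s).oddComponents.ncard := by
  obtain ⟨v₀, hv₀⟩ := (Set.ne_univ_iff_exists_notMem s).1 hs
  rw [induce_compl, cliqueNum_compl,
    two_mul_indepNum_of_embedding_hasse_nat (induceCycleGraphEmbedding hv₀), Nat.card_coe_set_eq]

end Cycle

theorem ceil_natCast_div_two_of_even {n : ℕ} (hn : Even n) : ⌈(n : ℚ) / 2⌉ = (n / 2 : ℕ) := by
  rw [← Nat.cast_ofNat, ← Nat.cast_div_charZero hn.two_dvd, Int.ceil_natCast]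

theorem cliqueNum_induce_compl_cycle_eq_iff_even_general {m : ℕ} {S : Finset (Fin m)}
    (hS : S.card < m) (heven : Even S.card) :
    (((cycleGraph m)ᶜ.induce (S : Set (Fin m))).cliqueNum : ℤ) = ⌈(S.card : ℚ) / 2⌉ ↔
      ∀ c : ((cycleGraph m).induce (S : Set (Fin m))).ConnectedComponent,
        Even c.supp.ncard := by
  have hproper : (S : Set (Fin m)) ≠ Set.univ := by
    rw [Ne, Finset.coe_eq_univ, ← Finset.card_eq_iff_eq_univ, Fintype.card_fin]
    exact hS.ne
  have hclique := two_mul_cliqueNum_induce_compl_cycleGraph hproper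
  rw [Set.ncard_coe_finset] at hclique
  rw [ceil_natCast_div_two_of_even heven, Nat.cast_inj, ← ncard_oddComponents_eq_zero_iff]
  grind

/-- **Lemma 1 (even case).** Let `V ⊆ V(C_{2p+1})` with `|V| = n < 2p+1`, `n` even, and
let `G = C̄_{2p+1}[V]`.  Then `cl(G) = ⌈n/2⌉` if and only if every connected component of
`C_{2p+1}[V]` has an even number of vertices. -/
theorem cliqueNum_induce_compl_cycle_eq_iff_even (p : ℕ) (hp : 1 ≤ p)
    (S : Finset (Fin (2*p+1))) (n : ℕ) (hcard : S.card = n) (hn : n < 2*p+1)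
    (hne : Even n) :
    (((((SimpleGraph.cycleGraph (2*p+1))ᶜ.induce (S : Set (Fin (2*p+1)))).cliqueNum : ℤ))
        = ⌈(n : ℚ) / 2⌉)
      ↔ ∀ c : ((SimpleGraph.cycleGraph (2*p+1)).induce
          (S : Set (Fin (2*p+1)))).ConnectedComponent, Even c.supp.ncard := by
  subst hcard
  exact cliqueNum_induce_compl_cycle_eq_iff_even_general hn hne
end

section
/- Let V ⊊ V(C_{2p+1}) and G = C̄_{2p+1}[V]. Suppose the graph C_{2p+1}[V] has two distinct connected components which are paths: one with vertices x_1, …, x_{2k} (in path order) and one with vertices w_1, …, w_s (in path order), where s = 2t is even. Then cl(G − {x_i, w_j}) = cl(G) for all i = 1, …, 2k and j = 1, …, s, and moreover cl(G − {x_{2k−2}, x_{2k−1}, w_j}) = cl(G) for all j = 1, …, s. -/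
/-!
Cliques of `Gᶜ` are independent sets of `G`. An independent set contains at most one vertex from
each pair `x (2m + 1), x (2m + 2)`, hence at most `k` vertices of the path `x 1, …, x (2k)`. Taking
the first vertex from each of the first `r` pairs and the second vertex from each of the others
attains this bound, whatever `r` is. Since no vertex outside a component is adjacent to it, these
`k` vertices can replace whatever a maximum independent set has on the component. So deleting the
other `k` vertices does not decrease the independence number, and a suitable choice of `r` avoids
any given vertex, or the pair `x (2k - 2), x (2k - 1)`.
-/

section

open SimpleGraph

variable {V : Type*} {G : SimpleGraph V} {S T P : Set V} {x : ℕ → V} {n k : ℕ}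

theorem card_le_cliqueNum_induce [Finite S] {M : Finset V} (hM : G.IsClique M)
    (hMS : (M : Set V) ⊆ S) : M.card ≤ (G.induce S).cliqueNum := by
  classical
  have hM' : (M.subtype (· ∈ S)).map (.subtype _) = M := Finset.subtype_map_of_mem hMS
  have hclique : (G.induce S).IsNClique M.card (M.subtype (· ∈ S)) := by
    rw [isNClique_induce_iff, hM']
    exact ⟨hM, rfl⟩
  exact hclique.card_eq ▸ hclique.isClique.card_le_cliqueNum

theorem exists_isClique_card_eq_cliqueNum_induce (G : SimpleGraph V) (S : Set V) :
    ∃ M : Finset V, (M : Set V) ⊆ S ∧ G.IsClique M ∧ M.card = (G.induce S).cliqueNum := by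
  obtain ⟨M, hM⟩ := (G.induce S).exists_isNClique_cliqueNum
  rw [isNClique_induce_iff] at hM
  exact ⟨M.map (.subtype _), by simp, hM.isClique, hM.card_eq⟩

theorem cliqueNum_induce_mono [Finite S] (hTS : T ⊆ S) :
    (G.induce T).cliqueNum ≤ (G.induce S).cliqueNum := by
  obtain ⟨M, hMT, hM, hcard⟩ := exists_isClique_card_eq_cliqueNum_induce G T
  exact hcard ▸ card_le_cliqueNum_induce hM (hMT.trans hTS)

theorem isIndepSet_union {s t : Set V} (hs : G.IsIndepSet s) (ht : G.IsIndepSet t)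
    (hst : ∀ u ∈ s, ∀ v ∈ t, ¬ G.Adj u v) : G.IsIndepSet (s ∪ t) :=
  Set.pairwise_union.2 ⟨hs, ht, fun u hu v hv _ ↦ ⟨hst u hu v hv, fun h ↦ hst u hu v hv h.symm⟩⟩

theorem cliqueNum_compl_induce_eq_of_exchange [Finite S] {A : Finset V} (hTS : T ⊆ S)
    (hST : S \ P ⊆ T) (hAT : (A : Set V) ⊆ T) (hAP : (A : Set V) ⊆ P) (hA : G.IsIndepSet A)
    (hsep : ∀ a ∈ A, ∀ v ∈ S \ P, ¬ G.Adj a v)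
    (hmax : ∀ M : Finset V, (M : Set V) ⊆ P → G.IsIndepSet M → M.card ≤ A.card) :
    (Gᶜ.induce T).cliqueNum = (Gᶜ.induce S).cliqueNum := by
  classical
  have : Finite T := Finite.Set.subset S hTS
  refine (cliqueNum_induce_mono hTS).antisymm ?_
  obtain ⟨M, hMS, hM, hcard⟩ := exists_isClique_card_eq_cliqueNum_induce Gᶜ S
  rw [isClique_compl] at hM
  have hinside : {v ∈ M | v ∈ P}.card ≤ A.card :=
    hmax _ (fun v hv ↦ (Finset.mem_filter.1 hv).2) (hM.mono (Finset.filter_subset _ M))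
  have houtside : ∀ v ∈ ({v ∈ M | v ∉ P} : Finset V), v ∈ S \ P :=
    fun v hv ↦ ⟨hMS (Finset.mem_filter.1 hv).1, (Finset.mem_filter.1 hv).2⟩
  have hdisj : Disjoint A {v ∈ M | v ∉ P} :=
    Finset.disjoint_left.2 fun a ha h ↦ (houtside a h).2 (hAP ha)
  have hindep : G.IsIndepSet ↑(A ∪ {v ∈ M | v ∉ P}) := by
    rw [Finset.coe_union]
    exact isIndepSet_union hA (hM.mono (Finset.filter_subset _ M))
      fun a ha v hv ↦ hsep a ha v (houtside v hv)
  have hsub : (↑(A ∪ {v ∈ M | v ∉ P}) : Set V) ⊆ T := by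
    rw [Finset.coe_union]
    exact Set.union_subset hAT fun v hv ↦ hST (houtside v hv)
  calc (Gᶜ.induce S).cliqueNum = {v ∈ M | v ∈ P}.card + {v ∈ M | v ∉ P}.card := by
        rw [Finset.card_filter_add_card_filter_not, hcard]
    _ ≤ A.card + {v ∈ M | v ∉ P}.card := by gcongr
    _ = (A ∪ {v ∈ M | v ∉ P}).card := (Finset.card_union_of_disjoint hdisj).symm
    _ ≤ (Gᶜ.induce T).cliqueNum := card_le_cliqueNum_induce (G.isClique_compl.2 hindep) hsub

theorem card_le_of_isIndepSet_of_subset_path {M : Finset V}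
    (hadj : ∀ i, 1 ≤ i → i + 1 ≤ n → G.Adj (x i) (x (i + 1))) (hM : G.IsIndepSet M)
    (hMx : (M : Set V) ⊆ x '' Set.Icc 1 n) : M.card ≤ (n + 1) / 2 := by
  have hpos : ∀ v ∈ M, ∃ i ∈ Set.Icc 1 n, x i = v := fun v hv ↦ hMx hv
  choose! pos hpos hxpos using hpos
  have hsucc_ne : ∀ u ∈ M, ∀ v ∈ M, pos u + 1 ≠ pos v := by
    intro u hu v hv huv
    have h : G.Adj u v := by
      simpa only [huv, hxpos u hu, hxpos v hv] using
        hadj (pos u) (hpos u hu).1 (huv ▸ (hpos v hv).2)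
    exact hM hu hv h.ne h
  have hpair : Set.InjOn (fun v ↦ (pos v - 1) / 2) M := by
    intro u hu v hv (huv : (pos u - 1) / 2 = (pos v - 1) / 2)
    have := hsucc_ne u hu v hv
    have := hsucc_ne v hv u hu
    have := (hpos u hu).1
    have := (hpos v hv).1
    rw [← hxpos u hu, ← hxpos v hv, show pos u = pos v by lia]
  have hmaps : Set.MapsTo (fun v ↦ (pos v - 1) / 2) M (Finset.range ((n + 1) / 2)) := by
    intro v hv
    have := hpos v hv
    simp only [Set.mem_Icc, Finset.coe_range, Set.mem_Iio] at this ⊢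
    lia
  simpa only [Finset.card_range] using Finset.card_le_card_of_injOn _ hmaps hpair

/-- The indices obtained by choosing from each pair `2m + 1, 2m + 2` with `m < k` the odd one if
`m < r` and the even one otherwise. They index the independent sets of size `k` of a path with
vertices `1, …, 2k`. -/
def alternatingIndices (k r : ℕ) : Finset ℕ :=
  {i ∈ Finset.Icc 1 (2 * k) | Odd i ↔ i ≤ 2 * r}

theorem mem_alternatingIndices {r i : ℕ} :
    i ∈ alternatingIndices k r ↔ i ∈ Set.Icc 1 (2 * k) ∧ (Odd i ↔ i ≤ 2 * r) := by
  simp only [alternatingIndices, Finset.mem_filter, Finset.mem_Icc, Set.mem_Icc]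

theorem le_card_alternatingIndices (k r : ℕ) : k ≤ (alternatingIndices k r).card := by
  have hmaps : Set.MapsTo (fun m ↦ if m < r then 2 * m + 1 else 2 * m + 2) (Finset.range k)
      (alternatingIndices k r) := by
    intro m hm
    simp only [Finset.coe_range, Set.mem_Iio] at hm
    simp only [Finset.mem_coe, mem_alternatingIndices, Set.mem_Icc, Nat.odd_iff]
    lia
  have hinj : Set.InjOn (fun m ↦ if m < r then 2 * m + 1 else 2 * m + 2) (Finset.range k) := by
    intro l _ m _ hlm
    simp only at hlm
    lia
  simpa only [Finset.card_range] using Finset.card_le_card_of_injOn _ hmaps hinj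

theorem succ_notMem_alternatingIndices {r i : ℕ} (hi : i ∈ alternatingIndices k r) :
    i + 1 ∉ alternatingIndices k r := by
  simp only [mem_alternatingIndices, Nat.odd_iff] at hi ⊢
  lia

theorem exists_notMem_alternatingIndices (k i : ℕ) : ∃ r, i ∉ alternatingIndices k r := by
  simp only [mem_alternatingIndices, Nat.odd_iff, Set.mem_Icc]
  by_cases hi : i % 2 = 1
  · exact ⟨0, by lia⟩
  · exact ⟨k, by lia⟩

/-- `x 1, …, x n` (in this order) induce a path in `G` and are all the vertices of a component of
`G[S]`. For `n = 0` the condition is void. -/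
structure IsPathComponent (G : SimpleGraph V) (S : Set V) (x : ℕ → V) (n : ℕ) : Prop where
  mapsTo : Set.MapsTo x (Set.Icc 1 n) S
  injOn : Set.InjOn x (Set.Icc 1 n)
  adj_iff : ∀ ⦃i⦄, i ∈ Set.Icc 1 n → ∀ ⦃j⦄, j ∈ Set.Icc 1 n →
    (G.Adj (x i) (x j) ↔ i + 1 = j ∨ j + 1 = i)
  mem_image_of_adj : ∀ ⦃i⦄, i ∈ Set.Icc 1 n → ∀ ⦃v⦄, v ∈ S → G.Adj (x i) v → v ∈ x '' Set.Icc 1 n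

namespace IsPathComponent

theorem anti (hx : IsPathComponent G S x n) (hTS : T ⊆ S) (hxT : x '' Set.Icc 1 n ⊆ T) :
    IsPathComponent G T x n where
  mapsTo := Set.mapsTo_iff_image_subset.2 hxT
  injOn := hx.injOn
  adj_iff := hx.adj_iff
  mem_image_of_adj _ hi _ hv := hx.mem_image_of_adj hi (hTS hv)

theorem isIndepSet_image_alternatingIndices (hx : IsPathComponent G S x (2 * k)) (r : ℕ) :
    G.IsIndepSet (x '' alternatingIndices k r) := by
  rintro _ ⟨i, hi, rfl⟩ _ ⟨j, hj, rfl⟩ - hij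
  rw [hx.adj_iff (mem_alternatingIndices.1 hi).1 (mem_alternatingIndices.1 hj).1] at hij
  rcases hij with rfl | rfl
  · exact succ_notMem_alternatingIndices hi hj
  · exact succ_notMem_alternatingIndices hj hi

theorem cliqueNum_compl_induce_sdiff_image [Finite S] (hx : IsPathComponent G S x (2 * k))
    {J : Set ℕ} (hJ : J ⊆ Set.Icc 1 (2 * k)) {r : ℕ}
    (hJr : Disjoint J (alternatingIndices k r)) :
    (Gᶜ.induce (S \ x '' J)).cliqueNum = (Gᶜ.induce S).cliqueNum := by
  classical
  have hsub : (alternatingIndices k r : Set ℕ) ⊆ Set.Icc 1 (2 * k) :=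
    fun i hi ↦ (mem_alternatingIndices.1 hi).1
  have hdisj : Disjoint (x '' alternatingIndices k r) (x '' J) := by
    rw [Set.disjoint_iff_inter_eq_empty, ← hx.injOn.image_inter hsub hJ, hJr.symm.inter_eq,
      Set.image_empty]
  have hcard : k ≤ ((alternatingIndices k r).image x).card := by
    rw [Finset.card_image_of_injOn (hx.injOn.mono hsub)]
    exact le_card_alternatingIndices k r
  apply cliqueNum_compl_induce_eq_of_exchange (P := x '' Set.Icc 1 (2 * k))
    (A := (alternatingIndices k r).image x) Set.sdiff_subset
    (Set.sdiff_subset_sdiff_right (Set.image_mono hJ))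
  case hAT =>
    rw [Finset.coe_image]
    exact Set.subset_sdiff.2 ⟨(hx.mapsTo.mono_left hsub).image_subset, hdisj⟩
  case hAP =>
    rw [Finset.coe_image]
    exact Set.image_mono hsub
  case hA =>
    rw [Finset.coe_image]
    exact hx.isIndepSet_image_alternatingIndices r
  case hsep =>
    rintro a ha v ⟨hvS, hvP⟩ hav
    obtain ⟨i, hi, rfl⟩ := Finset.mem_image.1 ha
    exact hvP (hx.mem_image_of_adj (hsub hi) hvS hav)
  case hmax =>
    intro M hMP hM
    have := card_le_of_isIndepSet_of_subset_path
      (fun i hi hi' ↦ (hx.adj_iff ⟨hi, by lia⟩ ⟨by lia, hi'⟩).2 (Or.inl rfl)) hM hMP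
    lia

end IsPathComponent

theorem cliqueNum_compl_induce_sdiff_two_path_components [Finite S] {t : ℕ} {w : ℕ → V}
    (hx : IsPathComponent G S x (2 * k)) (hw : IsPathComponent G S w (2 * t))
    (hxw : Disjoint (x '' Set.Icc 1 (2 * k)) (w '' Set.Icc 1 (2 * t)))
    {I : Set ℕ} (hI : I ⊆ Set.Icc 1 (2 * k)) {r : ℕ} (hIr : Disjoint I (alternatingIndices k r))
    {j : ℕ} (hj : j ∈ Set.Icc 1 (2 * t)) :
    (Gᶜ.induce (S \ (x '' I ∪ {w j}))).cliqueNum = (Gᶜ.induce S).cliqueNum := by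
  obtain ⟨q, hq⟩ := exists_notMem_alternatingIndices t j
  have hw' : IsPathComponent G (S \ x '' I) w (2 * t) := hw.anti Set.sdiff_subset
    (Set.subset_sdiff.2 ⟨hw.mapsTo.image_subset, (hxw.mono_left (Set.image_mono hI)).symm⟩)
  calc (Gᶜ.induce (S \ (x '' I ∪ {w j}))).cliqueNum
      = (Gᶜ.induce ((S \ x '' I) \ w '' {j})).cliqueNum := by
        rw [Set.image_singleton, Set.sdiff_sdiff]
    _ = (Gᶜ.induce (S \ x '' I)).cliqueNum :=
        hw'.cliqueNum_compl_induce_sdiff_image (Set.singleton_subset_iff.2 hj)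
          (Set.disjoint_singleton_left.2 hq)
    _ = (Gᶜ.induce S).cliqueNum := hx.cliqueNum_compl_induce_sdiff_image hI hIr

theorem eq_or_eq_of_degree_le_two {v a b c : V} [Fintype (G.neighborSet v)] (hv : G.degree v ≤ 2)
    (hab : a ≠ b) (ha : G.Adj v a) (hb : G.Adj v b) (hc : G.Adj v c) : c = a ∨ c = b := by
  by_contra! h
  have : 2 < (G.neighborFinset v).card := Finset.two_lt_card.2
    ⟨a, by simpa, b, by simpa, c, by simpa, hab, h.1.symm, h.2.symm⟩
  exact absurd hv this.not_ge

-- Together with `x a, …, x b`, an edge between the ends would form a cycle using up the degrees of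
-- its vertices, so no walk could leave it towards `z`.
theorem not_adj_of_path_of_degree_le_two [G.LocallyFinite] (hG : G.Preconnected)
    (hdeg : ∀ v, G.degree v ≤ 2) (hinj : Set.InjOn x (Set.Icc 1 n))
    (hadj : ∀ i, 1 ≤ i → i + 1 ≤ n → G.Adj (x i) (x (i + 1))) {z : V}
    (hz : z ∉ x '' Set.Icc 1 n) {a b : ℕ} (ha : 1 ≤ a) (hab : a + 2 ≤ b) (hb : b ≤ n) :
    ¬ G.Adj (x a) (x b) := by
  intro hclose
  have hprev : ∀ i, 1 < i → i ≤ n → G.Adj (x i) (x (i - 1)) := fun i hi hin ↦ by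
    simpa only [Nat.sub_add_cancel hi.le] using (hadj (i - 1) (by lia) (by lia)).symm
  have hsub : Set.Icc a b ⊆ Set.Icc 1 n := Set.Icc_subset_Icc ha hb
  have htwo : ∀ i ∈ Set.Icc a b, ∃ l ∈ Set.Icc a b, ∃ m ∈ Set.Icc a b, l ≠ m ∧
      G.Adj (x i) (x l) ∧ G.Adj (x i) (x m) := by
    rintro i ⟨hai, hib⟩
    rcases hai.eq_or_lt with rfl | hai
    · exact ⟨a + 1, ⟨by lia, by lia⟩, b, ⟨by lia, le_rfl⟩, by lia, hadj a ha (by lia), hclose⟩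
    rcases hib.eq_or_lt with rfl | hib
    · exact ⟨a, ⟨le_rfl, by lia⟩, i - 1, ⟨by lia, by lia⟩, by lia, hclose.symm,
        hprev i (by lia) hb⟩
    · exact ⟨i - 1, ⟨by lia, by lia⟩, i + 1, ⟨by lia, by lia⟩, by lia,
        hprev i (by lia) (by lia), hadj i (by lia) (by lia)⟩
  obtain ⟨p⟩ := hG (x a) z
  obtain ⟨d, -, ⟨i, hi, hid⟩, hexit⟩ := p.exists_boundary_dart (x '' Set.Icc a b)
    (Set.mem_image_of_mem x ⟨le_rfl, by lia⟩) fun h ↦ hz (Set.image_mono hsub h)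
  obtain ⟨l, hl, m, hm, hlm, hil, him⟩ := htwo i hi
  rcases eq_or_eq_of_degree_le_two (hdeg (x i)) (hinj.ne (hsub hl) (hsub hm) hlm) hil him
    (hid ▸ d.adj) with h | h
  · exact hexit ⟨l, hl, h.symm⟩
  · exact hexit ⟨m, hm, h.symm⟩

theorem adj_iff_of_path_of_degree_le_two [G.LocallyFinite] (hG : G.Preconnected)
    (hdeg : ∀ v, G.degree v ≤ 2) (hinj : Set.InjOn x (Set.Icc 1 n))
    (hadj : ∀ i, 1 ≤ i → i + 1 ≤ n → G.Adj (x i) (x (i + 1))) {z : V}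
    (hz : z ∉ x '' Set.Icc 1 n) {i j : ℕ} (hi : i ∈ Set.Icc 1 n) (hj : j ∈ Set.Icc 1 n) :
    G.Adj (x i) (x j) ↔ i + 1 = j ∨ j + 1 = i := by
  constructor
  · intro hij
    by_contra! hfar
    have hne : i ≠ j := by rintro rfl; exact hij.ne rfl
    rcases hne.lt_or_gt with hlt | hlt
    · exact not_adj_of_path_of_degree_le_two hG hdeg hinj hadj hz hi.1 (by lia) hj.2 hij
    · exact not_adj_of_path_of_degree_le_two hG hdeg hinj hadj hz hj.1 (by lia) hi.2 hij.symm
  · rintro (rfl | rfl)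
    · exact hadj i hi.1 hj.2
    · exact (hadj j hj.1 hi.2).symm

theorem mem_image_supp_of_adj {c : (G.induce S).ConnectedComponent} {u v : V}
    (hu : u ∈ Subtype.val '' c.supp) (hv : v ∈ S) (huv : G.Adj u v) :
    v ∈ Subtype.val '' c.supp := by
  obtain ⟨u, hu, rfl⟩ := hu
  exact ⟨⟨v, hv⟩, c.mem_supp_of_adj_mem_supp hu huv, rfl⟩

theorem isPathComponent_of_degree_le_two [G.LocallyFinite] (hG : G.Preconnected)
    (hdeg : ∀ v, G.degree v ≤ 2) (hS : S ≠ Set.univ) {c : (G.induce S).ConnectedComponent}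
    (hc : Subtype.val '' c.supp = x '' Set.Icc 1 n) (hinj : Set.InjOn x (Set.Icc 1 n))
    (hadj : ∀ i, 1 ≤ i → i + 1 ≤ n → G.Adj (x i) (x (i + 1))) : IsPathComponent G S x n := by
  have hxS : x '' Set.Icc 1 n ⊆ S := hc ▸ Subtype.coe_image_subset S c.supp
  obtain ⟨z, hz⟩ := (Set.ne_univ_iff_exists_notMem S).1 hS
  refine ⟨Set.mapsTo_iff_image_subset.2 hxS, hinj, fun i hi j hj ↦
    adj_iff_of_path_of_degree_le_two hG hdeg hinj hadj (fun h ↦ hz (hxS h)) hi hj, ?_⟩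
  intro i hi v hv hiv
  rw [← hc]
  exact mem_image_supp_of_adj (hc ▸ Set.mem_image_of_mem x hi) hv hiv

theorem cycleGraph_degree_le_two (n : ℕ) (v : Fin n) : (cycleGraph n).degree v ≤ 2 := by
  match n with
  | 0 => exact v.elim0
  | 1 => simp [cycleGraph_one_eq_bot]
  | n + 2 => exact cycleGraph_degree_two_le.trans_le Finset.card_le_two

end

theorem cliqueNum_delete_two_components_even_general {V : Type*} {G : SimpleGraph V} {S : Set V}
    [Finite S] {k t : ℕ} {x w : ℕ → V} (hx : IsPathComponent G S x (2 * k))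
    (hw : IsPathComponent G S w (2 * t))
    (hxw : Disjoint (x '' Set.Icc 1 (2 * k)) (w '' Set.Icc 1 (2 * t))) :
    (∀ i j : ℕ, 1 ≤ i → i ≤ 2 * k → 1 ≤ j → j ≤ 2 * t →
      (Gᶜ.induce (S \ {x i, w j})).cliqueNum = (Gᶜ.induce S).cliqueNum)
    ∧ (2 ≤ k → ∀ j : ℕ, 1 ≤ j → j ≤ 2 * t →
      (Gᶜ.induce (S \ {x (2 * k - 2), x (2 * k - 1), w j})).cliqueNum
        = (Gᶜ.induce S).cliqueNum) := by
  refine ⟨fun i j hi hi' hj hj' ↦ ?_, fun hk j hj hj' ↦ ?_⟩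
  · obtain ⟨r, hr⟩ := exists_notMem_alternatingIndices k i
    rw [Set.insert_eq, ← Set.image_singleton]
    exact cliqueNum_compl_induce_sdiff_two_path_components hx hw hxw
      (Set.singleton_subset_iff.2 ⟨hi, hi'⟩) (Set.disjoint_singleton_left.2 hr) ⟨hj, hj'⟩
  · have hI : ({2 * k - 2, 2 * k - 1} : Set ℕ) ⊆ Set.Icc 1 (2 * k) := by
      rintro i (rfl | rfl) <;> exact ⟨by lia, by lia⟩
    have hIr : Disjoint ({2 * k - 2, 2 * k - 1} : Set ℕ) (alternatingIndices k (k - 1)) := by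
      simp only [Set.disjoint_left, Finset.mem_coe, mem_alternatingIndices, Nat.odd_iff]
      rintro i (rfl | rfl) <;> lia
    rw [← Set.singleton_union (a := x (2 * k - 1)), ← Set.insert_union, ← Set.image_pair]
    exact cliqueNum_compl_induce_sdiff_two_path_components hx hw hxw hI hIr ⟨hj, hj'⟩

/-- **Lemma 3(a).** Let `V ⊊ V(C_{2p+1})` and `G = C̄_{2p+1}[V]`.  Suppose `C_{2p+1}[V]`
has two distinct connected components which are the paths `x_1, …, x_{2k}` and
`w_1, …, w_s` (in path order, 1-based) where `s = 2t` is even.  Then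
`cl(G - {x_i, w_j}) = cl(G)` for all `1 ≤ i ≤ 2k`, `1 ≤ j ≤ s`, and moreover (for `k ≥ 2`)
`cl(G - {x_{2k-2}, x_{2k-1}, w_j}) = cl(G)` for all `1 ≤ j ≤ s`. -/
theorem cliqueNum_delete_two_components_even (p k t s : ℕ) (hp : 1 ≤ p) (hk : 1 ≤ k)
    (ht : 1 ≤ t) (hst : s = 2*t)
    (S : Finset (Fin (2*p+1))) (hS : S ≠ Finset.univ)
    (c₁ c₂ : ((SimpleGraph.cycleGraph (2*p+1)).induce
        (S : Set (Fin (2*p+1)))).ConnectedComponent) (hcc : c₁ ≠ c₂)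
    (x w : ℕ → Fin (2*p+1))
    (hx : Subtype.val '' c₁.supp = x '' {i : ℕ | 1 ≤ i ∧ i ≤ 2*k})
    (hxinj : Set.InjOn x {i : ℕ | 1 ≤ i ∧ i ≤ 2*k})
    (hxadj : ∀ i : ℕ, 1 ≤ i → i + 1 ≤ 2*k →
      (SimpleGraph.cycleGraph (2*p+1)).Adj (x i) (x (i+1)))
    (hw : Subtype.val '' c₂.supp = w '' {j : ℕ | 1 ≤ j ∧ j ≤ s})
    (hwinj : Set.InjOn w {j : ℕ | 1 ≤ j ∧ j ≤ s})
    (hwadj : ∀ j : ℕ, 1 ≤ j → j + 1 ≤ s →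
      (SimpleGraph.cycleGraph (2*p+1)).Adj (w j) (w (j+1))) :
    (∀ i j : ℕ, 1 ≤ i → i ≤ 2*k → 1 ≤ j → j ≤ s →
      ((SimpleGraph.cycleGraph (2*p+1))ᶜ.induce
          ((S \ {x i, w j}) : Set (Fin (2*p+1)))).cliqueNum
        = ((SimpleGraph.cycleGraph (2*p+1))ᶜ.induce (S : Set (Fin (2*p+1)))).cliqueNum)
    ∧ (2 ≤ k → ∀ j : ℕ, 1 ≤ j → j ≤ s →
      ((SimpleGraph.cycleGraph (2*p+1))ᶜ.induce
          ((S \ {x (2*k-2), x (2*k-1), w j}) : Set (Fin (2*p+1)))).cliqueNum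
        = ((SimpleGraph.cycleGraph (2*p+1))ᶜ.induce (S : Set (Fin (2*p+1)))).cliqueNum) := by
  subst hst
  have hS' : (S : Set (Fin (2*p+1))) ≠ Set.univ := mt Finset.coe_eq_univ.1 hS
  have hpre := SimpleGraph.cycleGraph_preconnected (n := 2*p+1)
  have hdeg := cycleGraph_degree_le_two (2*p+1)
  have hdisj := SimpleGraph.pairwise_disjoint_supp_connectedComponent _ hcc
  exact cliqueNum_delete_two_components_even_general
    (isPathComponent_of_degree_le_two hpre hdeg hS' hx hxinj hxadj)
    (isPathComponent_of_degree_le_two hpre hdeg hS' hw hwinj hwadj)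
    (hx ▸ hw ▸ (Set.disjoint_image_iff Subtype.val_injective).2 hdisj)
end

section
/- Let V ⊊ V(C_{2p+1}) and G = C̄_{2p+1}[V]. Suppose the graph C_{2p+1}[V] has two distinct connected components which are paths: one with vertices x_1, …, x_{2k} (in path order) and one with vertices w_1, …, w_s (in path order), where s = 2t + 1 is odd. Then cl(G − {x_{2k−2}, x_{2k−1}, w_{2i}}) = cl(G) for every i = 1, …, t. -/
/-!
A clique of the complement is an independent set, so the claim is about the independence number
`α`. It is additive over parts that span no edge between them, and an induced path on `m` vertices
has `α = ⌈m / 2⌉`. Cutting `x_{2j}, x_{2j+1}` out of a path of order `2k` leaves induced paths of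
orders `2j - 1` and `2k - 2j - 1`, and `j + (k - j) = k`; cutting `w_{2i}` out of a path of order
`s` leaves orders `2i - 1` and `s - 2i`, and `i + ⌈(s - 2i) / 2⌉ = ⌈s / 2⌉`. So neither cut changes
`α` of its component. In the cycle, a path visiting consecutive neighbours without covering all
vertices has no chord, since the graph is connected with all degrees at most two.
-/

open SimpleGraph

section IndependenceNumber

variable {V : Type*} {G : SimpleGraph V} {A B C D S : Set V}

lemma cliqueNum_compl_induce (G : SimpleGraph V) (S : Set V) :
    (Gᶜ.induce S).cliqueNum = (G.induce S).indepNum := by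
  have induce_compl : Gᶜ.induce S = (G.induce S)ᶜ := by
    ext a b
    simp [Subtype.ext_iff]
  rw [induce_compl, cliqueNum_compl]

lemma card_le_indepNum_induce [Finite S] {T : Finset V} (hTS : (T : Set V) ⊆ S)
    (hT : G.IsIndepSet T) : T.card ≤ (G.induce S).indepNum := by
  classical
  have hT' : (G.induce S).IsIndepSet (T.subtype (· ∈ S) : Finset S) := fun a ha b hb hab =>
    hT (by simpa using ha) (by simpa using hb) (Subtype.coe_ne_coe.mpr hab)
  simpa only [Finset.card_subtype, Finset.filter_true_of_mem hTS] using hT'.card_le_indepNum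

lemma exists_isNIndepSet_indepNum_induce (G : SimpleGraph V) (S : Set V) :
    ∃ T : Finset V, (T : Set V) ⊆ S ∧ G.IsNIndepSet (G.induce S).indepNum T := by
  obtain ⟨T, hT⟩ := (G.induce S).exists_isNIndepSet_indepNum
  refine ⟨T.map (.subtype _), by simp, ?_, by rw [Finset.card_map, hT.card_eq]⟩
  rw [Finset.coe_map]
  exact (Subtype.val_injective.injOn.pairwise_image).mpr hT.isIndepSet

lemma indepNum_induce_union [Finite A] [Finite B] (hAB : Disjoint A B)
    (hadj : ∀ a ∈ A, ∀ b ∈ B, ¬ G.Adj a b) :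
    (G.induce (A ∪ B)).indepNum = (G.induce A).indepNum + (G.induce B).indepNum := by
  classical
  apply le_antisymm
  · obtain ⟨T, hTAB, hT⟩ := exists_isNIndepSet_indepNum_induce G (A ∪ B)
    have card_inter_A : (T.filter (· ∈ A)).card ≤ (G.induce A).indepNum :=
      card_le_indepNum_induce (by grind) (hT.isIndepSet.mono (by grind))
    have card_sdiff_A : (T.filter (· ∉ A)).card ≤ (G.induce B).indepNum :=
      card_le_indepNum_induce
        (fun v hv => (hTAB (Finset.mem_filter.mp hv).1).resolve_left (Finset.mem_filter.mp hv).2)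
        (hT.isIndepSet.mono (by grind))
    calc (G.induce (A ∪ B)).indepNum = T.card := hT.card_eq.symm
      _ = (T.filter (· ∈ A)).card + (T.filter (· ∉ A)).card :=
        (Finset.card_filter_add_card_filter_not _).symm
      _ ≤ _ := add_le_add card_inter_A card_sdiff_A
  · obtain ⟨T, hTA, hT⟩ := exists_isNIndepSet_indepNum_induce G A
    obtain ⟨U, hUB, hU⟩ := exists_isNIndepSet_indepNum_induce G B
    have disjoint_TU : Disjoint T U :=
      Finset.disjoint_coe.mp (hAB.mono hTA hUB)
    have indep_TU : G.IsIndepSet (T ∪ U : Finset V) := by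
      rw [Finset.coe_union, IsIndepSet, Set.pairwise_union]
      exact ⟨hT.isIndepSet, hU.isIndepSet, fun a ha b hb _ =>
        have not_adj := hadj a (hTA ha) b (hUB hb)
        ⟨not_adj, fun h => not_adj h.symm⟩⟩
    rw [← hT.card_eq, ← hU.card_eq, ← Finset.card_union_of_disjoint disjoint_TU]
    refine card_le_indepNum_induce ?_ indep_TU
    rw [Finset.coe_union]
    exact Set.union_subset_union hTA hUB

lemma indepNum_induce_sdiff_eq_of_forall_not_adj [Finite S] (hDC : D ⊆ C) (hCS : C ⊆ S)
    (hadj : ∀ a ∈ C, ∀ b ∈ S \ C, ¬ G.Adj a b)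
    (h : (G.induce (C \ D)).indepNum = (G.induce C).indepNum) :
    (G.induce (S \ D)).indepNum = (G.induce S).indepNum := by
  have : Finite C := Finite.Set.subset S hCS
  have sdiff_eq : S \ D = C \ D ∪ S \ C := by grind
  have disjoint_sdiff : Disjoint C (S \ C) := disjoint_sdiff_self_right
  calc (G.induce (S \ D)).indepNum
      = (G.induce (C \ D)).indepNum + (G.induce (S \ C)).indepNum := by
        rw [sdiff_eq, indepNum_induce_union (disjoint_sdiff.mono_left Set.sdiff_subset)
          fun a ha => hadj a ha.1]
    _ = (G.induce C).indepNum + (G.induce (S \ C)).indepNum := by rw [h]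
    _ = (G.induce S).indepNum := by
        rw [← indepNum_induce_union disjoint_sdiff hadj, Set.union_sdiff_cancel hCS]

end IndependenceNumber

section Component

variable {V : Type*} {G : SimpleGraph V} {S : Set V}

lemma not_adj_of_mem_image_supp (c : (G.induce S).ConnectedComponent) :
    ∀ a ∈ Subtype.val '' c.supp, ∀ b ∈ S \ Subtype.val '' c.supp, ¬ G.Adj a b := by
  rintro _ ⟨a, ha, rfl⟩ b ⟨hbS, hbc⟩ hab
  exact hbc ⟨⟨b, hbS⟩, c.mem_supp_of_adj_mem_supp ha hab, rfl⟩

lemma disjoint_image_supp {c₁ c₂ : (G.induce S).ConnectedComponent} (hcc : c₁ ≠ c₂) :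
    Disjoint (Subtype.val '' c₁.supp) (Subtype.val '' c₂.supp) :=
  (Set.disjoint_image_iff Subtype.val_injective).mpr
    (pairwise_disjoint_supp_connectedComponent _ hcc)

end Component

lemma card_le_of_succ_notMem {a b : ℕ} {J : Finset ℕ} (hJ : J ⊆ Finset.Icc a b)
    (hsucc : ∀ i ∈ J, i + 1 ∉ J) : J.card ≤ (b + 2 - a) / 2 := by
  -- Each of the pairs `{a, a + 1}, {a + 2, a + 3}, …` contains at most one element of `J`.
  rw [← Finset.card_range ((b + 2 - a) / 2)]
  refine Finset.card_le_card_of_injOn (fun i => (i - a) / 2)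
    (fun i hi => ?_) fun i hi j hj hij => ?_
  · have := Finset.mem_Icc.mp (hJ hi)
    simp only [Finset.coe_range, Set.mem_Iio]
    omega
  · have hi' := Finset.mem_Icc.mp (hJ hi)
    have hj' := Finset.mem_Icc.mp (hJ hj)
    have not_succ_i : j ≠ i + 1 := fun h => hsucc i hi (h ▸ hj)
    have not_succ_j : i ≠ j + 1 := fun h => hsucc j hj (h ▸ hi)
    simp only at hij
    omega

/-- The vertices `x i` with `i ∈ I` are distinct, and two of them are adjacent exactly when their
indices are consecutive. If `I` is an interval, they form an induced path in path order; a general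
`I` gives an induced disjoint union of paths. -/
structure IsInducedPathOn {V : Type*} (G : SimpleGraph V) (x : ℕ → V) (I : Set ℕ) : Prop where
  injOn : Set.InjOn x I
  adj_iff : ∀ i ∈ I, ∀ j ∈ I, G.Adj (x i) (x j) ↔ i + 1 = j ∨ j + 1 = i

namespace IsInducedPathOn

variable {V : Type*} {G : SimpleGraph V} {x : ℕ → V} {I J : Set ℕ}

lemma mono (h : IsInducedPathOn G x I) (hJI : J ⊆ I) : IsInducedPathOn G x J where
  injOn := h.injOn.mono hJI
  adj_iff i hi j hj := h.adj_iff i (hJI hi) j (hJI hj)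

lemma isIndepSet_image_iff (h : IsInducedPathOn G x I) (hJI : J ⊆ I) :
    G.IsIndepSet (x '' J) ↔ ∀ i ∈ J, i + 1 ∉ J := by
  rw [isIndepSet_iff, (h.injOn.mono hJI).pairwise_image]
  constructor
  · intro hJ i hi hi'
    exact hJ hi hi' (Nat.lt_succ_self i).ne
      ((h.adj_iff i (hJI hi) (i + 1) (hJI hi')).mpr (.inl rfl))
  · intro hJ i hi j hj _ hij
    rcases (h.adj_iff i (hJI hi) j (hJI hj)).mp hij with rfl | rfl
    · exact hJ i hi hj
    · exact hJ j hj hi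

theorem indepNum_induce_image_Icc {a b : ℕ} (h : IsInducedPathOn G x (Set.Icc a b)) :
    (G.induce (x '' Set.Icc a b)).indepNum = (b + 2 - a) / 2 := by
  classical
  apply le_antisymm
  · obtain ⟨T, hTx, hT⟩ := exists_isNIndepSet_indepNum_induce G (x '' Set.Icc a b)
    obtain ⟨J, hJ, rfl⟩ := Finset.subset_set_image_iff.mp hTx
    have hsucc : ∀ i ∈ J, i + 1 ∉ J := by
      simpa using (h.isIndepSet_image_iff hJ).mp (by simpa using hT.isIndepSet)
    calc (G.induce (x '' Set.Icc a b)).indepNum = (J.image x).card := hT.card_eq.symm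
      _ ≤ J.card := Finset.card_image_le
      _ ≤ (b + 2 - a) / 2 := card_le_of_succ_notMem (by simpa [← Finset.coe_subset] using hJ) hsucc
  · let J := (Finset.range ((b + 2 - a) / 2)).image (a + 2 * ·)
    have hJ : (J : Set ℕ) ⊆ Set.Icc a b := by
      intro i hi
      simp only [J, Finset.coe_image, Finset.coe_range, Set.mem_image, Set.mem_Iio] at hi
      simp only [Set.mem_Icc]
      omega
    have hsucc : ∀ i ∈ (J : Set ℕ), i + 1 ∉ (J : Set ℕ) := by
      simp only [J, Finset.coe_image, Set.mem_image]
      omega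
    have indep : G.IsIndepSet (J.image x : Finset V) := by
      simpa using (h.isIndepSet_image_iff hJ).mpr hsucc
    calc (b + 2 - a) / 2 = J.card := by
          rw [Finset.card_image_of_injective _ fun i j hij => by simpa using hij, Finset.card_range]
      _ = (J.image x).card := (Finset.card_image_of_injOn (h.injOn.mono hJ)).symm
      _ ≤ _ := card_le_indepNum_induce (by simpa using Set.image_mono hJ) indep

theorem indepNum_induce_image_Icc_sdiff {a b m : ℕ} (h : IsInducedPathOn G x (Set.Icc 1 m))
    (ha : 1 ≤ a) (hab : a ≤ b) (hbm : b ≤ m) :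
    (G.induce (x '' Set.Icc 1 m \ x '' Set.Icc a b)).indepNum = a / 2 + (m + 1 - b) / 2 := by
  have left_subset : Set.Icc 1 (a - 1) ⊆ Set.Icc 1 m := Set.Icc_subset_Icc le_rfl (by omega)
  have right_subset : Set.Icc (b + 1) m ⊆ Set.Icc 1 m := Set.Icc_subset_Icc (by omega) le_rfl
  have sdiff_eq : x '' Set.Icc 1 m \ x '' Set.Icc a b =
      x '' Set.Icc 1 (a - 1) ∪ x '' Set.Icc (b + 1) m := by
    rw [← h.injOn.image_sdiff_subset (Set.Icc_subset_Icc ha hbm), ← Set.image_union]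
    congr 1
    ext i
    simp only [Set.mem_sdiff, Set.mem_union, Set.mem_Icc]
    omega
  have disjoint_left_right : Disjoint (x '' Set.Icc 1 (a - 1)) (x '' Set.Icc (b + 1) m) := by
    refine Disjoint.image ?_ h.injOn left_subset right_subset
    rw [Set.disjoint_left]
    simp only [Set.mem_Icc]
    omega
  have not_adj : ∀ u ∈ x '' Set.Icc 1 (a - 1), ∀ v ∈ x '' Set.Icc (b + 1) m, ¬ G.Adj u v := by
    rintro _ ⟨i, hi, rfl⟩ _ ⟨j, hj, rfl⟩
    rw [h.adj_iff i (left_subset hi) j (right_subset hj)]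
    simp only [Set.mem_Icc] at hi hj
    omega
  rw [sdiff_eq, indepNum_induce_union disjoint_left_right not_adj,
    (h.mono left_subset).indepNum_induce_image_Icc,
    (h.mono right_subset).indepNum_induce_image_Icc]
  omega

lemma indepNum_induce_image_sdiff_singleton {i m : ℕ} (h : IsInducedPathOn G x (Set.Icc 1 m))
    (hi : 1 ≤ i) (him : 2 * i ≤ m) :
    (G.induce (x '' Set.Icc 1 m \ {x (2 * i)})).indepNum =
      (G.induce (x '' Set.Icc 1 m)).indepNum := by
  have singleton_eq : {x (2 * i)} = x '' Set.Icc (2 * i) (2 * i) := by simp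
  rw [singleton_eq, h.indepNum_induce_image_Icc_sdiff (by omega) le_rfl him,
    h.indepNum_induce_image_Icc]
  omega

lemma indepNum_induce_image_sdiff_pair {j k : ℕ} (h : IsInducedPathOn G x (Set.Icc 1 (2 * k)))
    (hj : 1 ≤ j) (hjk : j < k) :
    (G.induce (x '' Set.Icc 1 (2 * k) \ {x (2 * j), x (2 * j + 1)})).indepNum =
      (G.induce (x '' Set.Icc 1 (2 * k))).indepNum := by
  have pair_eq : {x (2 * j), x (2 * j + 1)} = x '' Set.Icc (2 * j) (2 * j + 1) := by
    rw [← Set.image_pair]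
    congr 1
    ext n
    simp only [Set.mem_insert_iff, Set.mem_singleton_iff, Set.mem_Icc]
    omega
  rw [pair_eq, h.indepNum_induce_image_Icc_sdiff (by omega) (by omega) (by omega),
    h.indepNum_induce_image_Icc]
  omega

end IsInducedPathOn

section DegreeTwo

variable {V : Type*} {G : SimpleGraph V}

lemma eq_univ_of_forall_adj_mem {S : Set V} (hG : G.Preconnected) (hS : S.Nonempty)
    (hadj : ∀ a ∈ S, ∀ b, G.Adj a b → b ∈ S) : S = Set.univ := by
  obtain ⟨u, hu⟩ := hS
  by_contra! hne
  obtain ⟨v, hv⟩ := (Set.ne_univ_iff_exists_notMem S).mp hne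
  obtain ⟨p⟩ := hG u v
  obtain ⟨d, -, hd, hd'⟩ := p.exists_boundary_dart S hu hv
  exact hd' (hadj _ hd _ d.adj)

lemma neighborSet_eq_pair_of_encard_le_two {v a b : V} (hv : (G.neighborSet v).encard ≤ 2)
    (ha : G.Adj v a) (hb : G.Adj v b) (hab : a ≠ b) : G.neighborSet v = {a, b} :=
  ((Set.toFinite {a, b}).eq_of_subset_of_encard_le (Set.pair_subset ha hb)
    (hv.trans (Set.encard_pair hab).ge)).symm

variable {x : ℕ → V} {m : ℕ}

lemma neighborSet_succ_eq_pair_of_encard_le_two {i : ℕ}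
    (hdeg : (G.neighborSet (x (i + 1))).encard ≤ 2) (hinj : Set.InjOn x (Set.Icc 1 m))
    (hadj : ∀ i, 1 ≤ i → i + 1 ≤ m → G.Adj (x i) (x (i + 1))) (hi : 1 ≤ i) (him : i + 2 ≤ m) :
    G.neighborSet (x (i + 1)) = {x i, x (i + 2)} := by
  refine neighborSet_eq_pair_of_encard_le_two hdeg (hadj i hi (by omega)).symm
    (hadj (i + 1) (by omega) him) fun h => ?_
  have := hinj ⟨hi, by omega⟩ ⟨by omega, him⟩ h
  omega

lemma eq_endpoints_of_chord_of_encard_neighborSet_le_two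
    (hdeg : ∀ v, (G.neighborSet v).encard ≤ 2) (hinj : Set.InjOn x (Set.Icc 1 m))
    (hadj : ∀ i, 1 ≤ i → i + 1 ≤ m → G.Adj (x i) (x (i + 1))) {i j : ℕ} (hi : 1 ≤ i)
    (hij : i + 1 < j) (hjm : j ≤ m) (hchord : G.Adj (x i) (x j)) : i = 1 ∧ j = m := by
  have index_of_adj_interior : ∀ l n, 1 ≤ l → l + 2 ≤ m → 1 ≤ n → n ≤ m →
      G.Adj (x (l + 1)) (x n) → n = l ∨ n = l + 2 := by
    intro l n hl hlm hn hnm hln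
    have mem_pair : x n ∈ ({x l, x (l + 2)} : Set V) :=
      neighborSet_succ_eq_pair_of_encard_le_two (hdeg _) hinj hadj hl hlm ▸ hln
    exact mem_pair.imp (hinj ⟨hn, hnm⟩ ⟨hl, by omega⟩) (hinj ⟨hn, hnm⟩ ⟨by omega, hlm⟩)
  constructor
  · by_contra hi'
    obtain ⟨l, rfl⟩ := Nat.exists_eq_add_of_le' hi
    have := index_of_adj_interior l j (by omega) (by omega) (by omega) hjm hchord
    omega
  · by_contra hj'
    obtain ⟨l, rfl⟩ := Nat.exists_eq_add_of_le' (show 1 ≤ j by omega)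
    have := index_of_adj_interior l i (by omega) (by omega) hi (by omega) hchord.symm
    omega

theorem image_Icc_eq_univ_of_adj_endpoints_of_encard_neighborSet_le_two (hG : G.Preconnected)
    (hdeg : ∀ v, (G.neighborSet v).encard ≤ 2) (hinj : Set.InjOn x (Set.Icc 1 m))
    (hadj : ∀ i, 1 ≤ i → i + 1 ≤ m → G.Adj (x i) (x (i + 1))) (hm : 2 < m)
    (hclose : G.Adj (x 1) (x m)) : x '' Set.Icc 1 m = Set.univ := by
  have x_mem : ∀ l, 1 ≤ l → l ≤ m → x l ∈ x '' Set.Icc 1 m :=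
    fun l hl hlm => Set.mem_image_of_mem x ⟨hl, hlm⟩
  have first : G.neighborSet (x 1) = {x 2, x m} := by
    refine neighborSet_eq_pair_of_encard_le_two (hdeg _) (hadj 1 le_rfl (by omega)) hclose
      fun h => ?_
    have := hinj ⟨by omega, by omega⟩ ⟨by omega, le_rfl⟩ h
    omega
  have last : G.neighborSet (x m) = {x (m - 1), x 1} := by
    have pred_adj : G.Adj (x (m - 1)) (x m) := by
      simpa only [Nat.sub_add_cancel (show 1 ≤ m by omega)] using
        hadj (m - 1) (by omega) (by omega)
    refine neighborSet_eq_pair_of_encard_le_two (hdeg _) pred_adj.symm hclose.symm fun h => ?_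
    have := hinj ⟨by omega, by omega⟩ ⟨le_rfl, by omega⟩ h
    omega
  have neighborSet_subset : ∀ l ∈ Set.Icc 1 m, G.neighborSet (x l) ⊆ x '' Set.Icc 1 m := by
    rintro l ⟨hl, hlm⟩
    rcases hl.eq_or_lt with rfl | hl
    · exact first ▸ Set.pair_subset (x_mem 2 (by omega) (by omega)) (x_mem m (by omega) le_rfl)
    rcases hlm.eq_or_lt with rfl | hlm
    · exact last ▸ Set.pair_subset (x_mem _ (by omega) (by omega)) (x_mem 1 le_rfl (by omega))
    obtain ⟨l, rfl⟩ := Nat.exists_eq_add_of_le' hl.le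
    rw [neighborSet_succ_eq_pair_of_encard_le_two (hdeg _) hinj hadj (by omega) (by omega)]
    exact Set.pair_subset (x_mem l (by omega) (by omega)) (x_mem (l + 2) (by omega) (by omega))
  refine eq_univ_of_forall_adj_mem hG ⟨x 1, x_mem 1 le_rfl (by omega)⟩ ?_
  rintro _ ⟨l, hl, rfl⟩ b hb
  exact neighborSet_subset l hl hb

theorem isInducedPathOn_of_encard_neighborSet_le_two (hG : G.Preconnected)
    (hdeg : ∀ v, (G.neighborSet v).encard ≤ 2) (hinj : Set.InjOn x (Set.Icc 1 m))
    (hadj : ∀ i, 1 ≤ i → i + 1 ≤ m → G.Adj (x i) (x (i + 1)))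
    (hne : x '' Set.Icc 1 m ≠ Set.univ) : IsInducedPathOn G x (Set.Icc 1 m) := by
  have succ_of_lt : ∀ i ∈ Set.Icc 1 m, ∀ j ∈ Set.Icc 1 m, i < j → G.Adj (x i) (x j) →
      i + 1 = j := by
    intro i hi j hj hij h
    by_contra hsucc
    -- A chord at an interior vertex would give it three neighbours, so the chord joins the two ends
    -- and closes the path to a cycle that no edge leaves.
    obtain ⟨rfl, rfl⟩ := eq_endpoints_of_chord_of_encard_neighborSet_le_two hdeg hinj hadj hi.1
      (by omega) hj.2 h
    exact hne (image_Icc_eq_univ_of_adj_endpoints_of_encard_neighborSet_le_two hG hdeg hinj hadj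
      (by omega) h)
  refine ⟨hinj, fun i hi j hj => ⟨fun h => ?_, ?_⟩⟩
  · rcases lt_trichotomy i j with hij | rfl | hji
    · exact .inl (succ_of_lt i hi j hj hij h)
    · exact (h.ne rfl).elim
    · exact .inr (succ_of_lt j hj i hi hji h.symm)
  · rintro (rfl | rfl)
    · exact hadj i hi.1 hj.2
    · exact (hadj j hj.1 hi.2).symm

end DegreeTwo

lemma encard_neighborSet_cycleGraph_le_two {n : ℕ} (v : Fin n) :
    ((cycleGraph n).neighborSet v).encard ≤ 2 := by
  match n with
  | 0 => exact v.elim0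
  | 1 => simp [cycleGraph_one_eq_bot, neighborSet]
  | n + 2 =>
    rw [cycleGraph_neighborSet]
    exact (Set.encard_insert_le _ _).trans (by norm_num)

lemma isInducedPathOn_cycleGraph_of_image_supp_eq {n m : ℕ} {S : Set (Fin n)} (hS : S ≠ Set.univ)
    {c : ((cycleGraph n).induce S).ConnectedComponent} {x : ℕ → Fin n}
    (hc : Subtype.val '' c.supp = x '' Set.Icc 1 m) (hinj : Set.InjOn x (Set.Icc 1 m))
    (hadj : ∀ i, 1 ≤ i → i + 1 ≤ m → (cycleGraph n).Adj (x i) (x (i + 1))) :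
    IsInducedPathOn (cycleGraph n) x (Set.Icc 1 m) := by
  refine isInducedPathOn_of_encard_neighborSet_le_two cycleGraph_preconnected
    encard_neighborSet_cycleGraph_le_two hinj hadj fun h => hS ?_
  rw [← Set.univ_subset_iff, ← h, ← hc]
  exact Subtype.coe_image_subset S c.supp

theorem cliqueNum_delete_two_components_odd_general {V : Type*} {G : SimpleGraph V} {S : Set V}
    [Finite S] {c₁ c₂ : (G.induce S).ConnectedComponent} (hcc : c₁ ≠ c₂) {x w : ℕ → V} {k s : ℕ}
    (hx : Subtype.val '' c₁.supp = x '' Set.Icc 1 (2 * k))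
    (hxG : IsInducedPathOn G x (Set.Icc 1 (2 * k)))
    (hw : Subtype.val '' c₂.supp = w '' Set.Icc 1 s) (hwG : IsInducedPathOn G w (Set.Icc 1 s))
    {i j : ℕ} (hj : 1 ≤ j) (hjk : j < k) (hi : 1 ≤ i) (his : 2 * i ≤ s) :
    (Gᶜ.induce (S \ {x (2 * j), x (2 * j + 1), w (2 * i)})).cliqueNum =
      (Gᶜ.induce S).cliqueNum := by
  have hxS : x '' Set.Icc 1 (2 * k) ⊆ S := hx ▸ Subtype.coe_image_subset S c₁.supp
  have hwS : w '' Set.Icc 1 s ⊆ S := hw ▸ Subtype.coe_image_subset S c₂.supp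
  have hxw : Disjoint (x '' Set.Icc 1 (2 * k)) (w '' Set.Icc 1 s) :=
    hx ▸ hw ▸ disjoint_image_supp hcc
  set X : Set V := {x (2 * j), x (2 * j + 1)}
  have hX : X ⊆ x '' Set.Icc 1 (2 * k) := Set.pair_subset
    (Set.mem_image_of_mem x ⟨by omega, by omega⟩) (Set.mem_image_of_mem x ⟨by omega, by omega⟩)
  have hW : {w (2 * i)} ⊆ w '' Set.Icc 1 s :=
    Set.singleton_subset_iff.mpr (Set.mem_image_of_mem w ⟨by omega, his⟩)
  have delete_X : (G.induce (S \ X)).indepNum = (G.induce S).indepNum :=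
    indepNum_induce_sdiff_eq_of_forall_not_adj hX hxS (hx ▸ not_adj_of_mem_image_supp c₁)
      (hxG.indepNum_induce_image_sdiff_pair hj hjk)
  have delete_w : (G.induce ((S \ X) \ {w (2 * i)})).indepNum = (G.induce (S \ X)).indepNum :=
    indepNum_induce_sdiff_eq_of_forall_not_adj hW
      (Set.subset_sdiff.mpr ⟨hwS, hxw.symm.mono_right hX⟩)
      (fun a ha b hb => (hw ▸ not_adj_of_mem_image_supp c₂) a ha b ⟨hb.1.1, hb.2⟩)
      (hwG.indepNum_induce_image_sdiff_singleton hi his)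
  have sdiff_eq : S \ {x (2 * j), x (2 * j + 1), w (2 * i)} = (S \ X) \ {w (2 * i)} := by
    grind
  rw [cliqueNum_compl_induce, cliqueNum_compl_induce, sdiff_eq, delete_w, delete_X]

/-- **Lemma 3(b).** Let `V ⊊ V(C_{2p+1})` and `G = C̄_{2p+1}[V]`.  Suppose `C_{2p+1}[V]`
has two distinct connected components which are the paths `x_1, …, x_{2k}` (with `k ≥ 2`)
and `w_1, …, w_s` (in path order, 1-based) where `s = 2t + 1` is odd.  Then
`cl(G - {x_{2k-2}, x_{2k-1}, w_{2i}}) = cl(G)` for every `i = 1, …, t`. -/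
theorem cliqueNum_delete_two_components_odd (p k t s : ℕ) (hp : 1 ≤ p) (hk : 2 ≤ k)
    (hst : s = 2*t + 1)
    (S : Finset (Fin (2*p+1))) (hS : S ≠ Finset.univ)
    (c₁ c₂ : ((SimpleGraph.cycleGraph (2*p+1)).induce
        (S : Set (Fin (2*p+1)))).ConnectedComponent) (hcc : c₁ ≠ c₂)
    (x w : ℕ → Fin (2*p+1))
    (hx : Subtype.val '' c₁.supp = x '' {i : ℕ | 1 ≤ i ∧ i ≤ 2*k})
    (hxinj : Set.InjOn x {i : ℕ | 1 ≤ i ∧ i ≤ 2*k})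
    (hxadj : ∀ i : ℕ, 1 ≤ i → i + 1 ≤ 2*k →
      (SimpleGraph.cycleGraph (2*p+1)).Adj (x i) (x (i+1)))
    (hw : Subtype.val '' c₂.supp = w '' {j : ℕ | 1 ≤ j ∧ j ≤ s})
    (hwinj : Set.InjOn w {j : ℕ | 1 ≤ j ∧ j ≤ s})
    (hwadj : ∀ j : ℕ, 1 ≤ j → j + 1 ≤ s →
      (SimpleGraph.cycleGraph (2*p+1)).Adj (w j) (w (j+1))) :
    ∀ i : ℕ, 1 ≤ i → i ≤ t →
      ((SimpleGraph.cycleGraph (2*p+1))ᶜ.induce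
          ((S \ {x (2*k-2), x (2*k-1), w (2*i)}) : Set (Fin (2*p+1)))).cliqueNum
        = ((SimpleGraph.cycleGraph (2*p+1))ᶜ.induce (S : Set (Fin (2*p+1)))).cliqueNum := by
  intro i hi hit
  have hS' : (S : Set (Fin (2 * p + 1))) ≠ Set.univ := mt Finset.coe_eq_univ.mp hS
  obtain ⟨j, rfl⟩ := Nat.exists_eq_add_of_le' (show 1 ≤ k by omega)
  exact cliqueNum_delete_two_components_odd_general hcc
    hx (isInducedPathOn_cycleGraph_of_image_supp_eq hS' hx hxinj hxadj)
    hw (isInducedPathOn_cycleGraph_of_image_supp_eq hS' hw hwinj hwadj)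
    (j := j) (by omega) (by omega) hi (by omega)
end
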